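/- Under the hypotheses of combinatorial tuning, if λ₀ and every λ_v are post-critically finite rational laminations (all Julia critical elements are contained in Q/Z, i.e., every finite critical unlinked class is absent), then the combinatorial tuning λ' = T_α(λ₀,(λ_v)) is post-critically finite; moreover if λ₀ and (λ_v) are hyperbolic (no Julia critical elements), then λ' is hyperbolic. -/

import Mathlib

noncomputable section
open Set Function

/-- The circle `ℝ/ℤ`. -/
abbrev Circle1 := AddCircle (1 : ℝ)

/-- Multiplication by `d` on the circle. -/
def md (d : ℕ) (x : Circle1) : Circle1 := d • x

/-- The rational angles `ℚ/ℤ ⊆ ℝ/ℤ`. -/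
def ratC : Set Circle1 := {x | ∃ q : ℚ, x = ((q : ℝ) : Circle1)}

/-- `A` and `B` are unlinked: `B` is contained in a single connected
component of the complement of `A`. -/
def Unlinked (A B : Set Circle1) : Prop :=
  ∃ x ∈ Aᶜ, B ⊆ connectedComponentIn Aᶜ x

/-- `C` is a connected component of `S`. -/
def IsCompOf (C S : Set Circle1) : Prop :=
  ∃ x ∈ S, C = connectedComponentIn S x

/-- The class of `x` under a relation `r`. -/
def relClass (r : Circle1 → Circle1 → Prop) (x : Circle1) : Set Circle1 := {y | r x y}

/-- A rational lamination: a closed equivalence relation on `ℚ/ℤ` with finite,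
pairwise unlinked classes. -/
structure RatLam where
  rel : Circle1 → Circle1 → Prop
  rel_rat : ∀ x y, rel x y → x ∈ ratC ∧ y ∈ ratC
  refl : ∀ x ∈ ratC, rel x x
  symm : ∀ x y, rel x y → rel y x
  trans : ∀ x y z, rel x y → rel y z → rel x z
  closed' : ∀ x ∈ ratC, ∀ y ∈ ratC,
    (x, y) ∈ closure {p : Circle1 × Circle1 | rel p.1 p.2} → rel x y
  finiteClass : ∀ x, (relClass rel x).Finite
  unlinkedClass : ∀ x y, ¬ rel x y → Unlinked (relClass rel x) (relClass rel y)

/-- `m_d` maps `A` onto `B` in a consecutive-preserving way: the image of `A` is `B`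
and the connected components of the complement of `A` are sent to components of the
complement of `B` endpoint-wise. -/
def ConsecutiveImage (d : ℕ) (A B : Set Circle1) : Prop :=
  md d '' A = B ∧
    ∀ C, IsCompOf C Aᶜ → ∃ C', IsCompOf C' Bᶜ ∧ frontier C' = md d '' frontier C

/-- A `d`-invariant rational lamination. -/
structure InvRatLam (d : ℕ) extends RatLam where
  invariant : ∀ x ∈ ratC,
    ConsecutiveImage d (relClass rel x) (relClass rel (md d x))

/-- `m_d : A → m_d(A)` is `δ`-to-one. -/
def classDeg (d : ℕ) (A : Set Circle1) (δ : ℕ) : Prop :=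
  ∀ y ∈ md d '' A, Set.ncard {x | x ∈ A ∧ md d x = y} = δ

/-- The `λ`-unlinked relation on irrational angles: `θ ~ θ'` iff they lie in the same
connected component of the complement of every `λ`-class. -/
def UnlRel (r : Circle1 → Circle1 → Prop) (θ θ' : Circle1) : Prop :=
  θ ∉ ratC ∧ θ' ∉ ratC ∧
    (θ = θ' ∨ ∀ x ∈ ratC, θ' ∈ connectedComponentIn (relClass r x)ᶜ θ)

/-- `L` is a `λ`-unlinked class. -/
def IsUnlClass (r : Circle1 → Circle1 → Prop) (L : Set Circle1) : Prop :=
  ∃ θ, θ ∉ ratC ∧ L = {θ' | UnlRel r θ θ'}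

/-- The real extension `λ̂`: the smallest equivalence relation containing the closure
of `λ` in `(ℝ/ℤ)²`. -/
def realExt (r : Circle1 → Circle1 → Prop) : Circle1 → Circle1 → Prop :=
  Relation.EqvGen (fun a b => (a, b) ∈ closure {p : Circle1 × Circle1 | r p.1 p.2})

/-- `A` is a class of the real extension `λ̂` of `r`. -/
def IsRealClass (r : Circle1 → Circle1 → Prop) (A : Set Circle1) : Prop :=
  ∃ x, A = {y | realExt r x y}

/-- A Julia critical element: a `λ̂`-class on which `m_d` is not injective. -/
def JuliaCritElem (d : ℕ) (r : Circle1 → Circle1 → Prop) (A : Set Circle1) : Prop :=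
  IsRealClass r A ∧ ¬ Set.InjOn (md d) A

/-- A Fatou critical element: an infinite `λ`-unlinked class on which `m_d` is not
injective (i.e. of degree `> 1`). -/
def FatouCritElem (d : ℕ) (r : Circle1 → Circle1 → Prop) (L : Set Circle1) : Prop :=
  IsUnlClass r L ∧ L.Infinite ∧ ¬ Set.InjOn (md d) L

/-- A critical element of `λ`. -/
def CritElem (d : ℕ) (r : Circle1 → Circle1 → Prop) (C : Set Circle1) : Prop :=
  JuliaCritElem d r C ∨ FatouCritElem d r C

/-- The base relation for combinatorial tuning: `λ₀` together with the pull-backs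
`λ*_w = π_w^*(λ_{w'})` over all infinite `λ₀`-unlinked classes `w`, where
`w' = m_d^{n_w}(w)` is the first forward image lying in the set `V` of Fatou critical
elements and `π_w = α_{w'} ∘ m_d^{n_w}`. -/
def tuningBase (d : ℕ) (lam0 : InvRatLam d) (V : Set (Set Circle1))
    (α : Set Circle1 → Circle1 → Circle1) (lamv : Set Circle1 → RatLam)
    (x y : Circle1) : Prop :=
  lam0.rel x y ∨
    ∃ (w : Set Circle1) (n : ℕ),
      IsUnlClass lam0.rel w ∧ w.Infinite ∧
      (md d)^[n] '' w ∈ V ∧ (∀ j < n, (md d)^[j] '' w ∉ V) ∧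
      x ∈ closure w ∧ y ∈ closure w ∧ x ∈ ratC ∧ y ∈ ratC ∧
      (lamv ((md d)^[n] '' w)).rel
        (α ((md d)^[n] '' w) ((md d)^[n] x)) (α ((md d)^[n] '' w) ((md d)^[n] y))

/-- The combinatorial tuning `T_α(λ₀, (λ_v))`: the smallest equivalence relation on
`ℚ/ℤ` containing `λ₀` and all the pull-backs `λ*_w`. -/
def tuningRel (d : ℕ) (lam0 : InvRatLam d) (V : Set (Set Circle1))
    (α : Set Circle1 → Circle1 → Circle1) (lamv : Set Circle1 → RatLam)
    (x y : Circle1) : Prop :=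
  x ∈ ratC ∧ y ∈ ratC ∧ Relation.EqvGen (tuningBase d lam0 V α lamv) x y

/-- Hypotheses of the combinatorial tuning theorem: `V` is the set of Fatou critical
elements of `λ₀`; `ret` gives the first-return times to `V`; `δf` gives the degrees;
`α` is an internal angle system; `lamv` is an invariant rational lamination over the
reduced mapping schema of `λ₀`. -/
structure TuningData (d : ℕ) (lam0 : InvRatLam d) where
  V : Set (Set Circle1)
  hV : ∀ L : Set Circle1, L ∈ V ↔ FatouCritElem d lam0.rel L
  ret : Set Circle1 → ℕ
  δf : Set Circle1 → ℕ
  α : Set Circle1 → Circle1 → Circle1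
  lamv : Set Circle1 → RatLam
  hret : ∀ v ∈ V, 0 < ret v ∧ (md d)^[ret v] '' v ∈ V ∧
    ∀ j, 0 < j → j < ret v → (md d)^[j] '' v ∉ V
  hδ : ∀ v ∈ V, classDeg d v (δf v)
  -- `α_v` induces a homeomorphism `closure(v)/λ̂₀ → ℝ/ℤ`:
  hα_cont : ∀ v ∈ V, ContinuousOn (α v) (closure v)
  hα_surj : ∀ v ∈ V, Set.SurjOn (α v) (closure v) Set.univ
  hα_fib : ∀ v ∈ V, ∀ x ∈ closure v, ∀ y ∈ closure v,
    (α v x = α v y ↔ realExt lam0.rel x y)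
  -- equivariance `α_{σ(v)}(m_d^{ℓ_v} θ) = δ(v)·α_v(θ)`:
  hα_equiv : ∀ v ∈ V, ∀ θ ∈ closure v,
    α ((md d)^[ret v] '' v) ((md d)^[ret v] θ) = md (δf v) (α v θ)
  -- `(λ_v)` is an invariant rational lamination over the reduced schema:
  hlam_inv : ∀ v ∈ V, ∀ x ∈ ratC,
    ConsecutiveImage (δf v) (relClass (lamv v).rel x)
      (relClass (lamv ((md d)^[ret v] '' v)).rel (md (δf v) x))

/-- A rational lamination is hyperbolic if it has no Julia critical element. -/
def HyperbolicLam (d : ℕ) (r : Circle1 → Circle1 → Prop) : Prop :=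
  ∀ A : Set Circle1, IsRealClass r A → Set.InjOn (md d) A

/-- A rational lamination is post-critically finite if every Julia critical element is
contained in `ℚ/ℤ`. -/
def PCFLam (d : ℕ) (r : Circle1 → Circle1 → Prop) : Prop :=
  ∀ A : Set Circle1, IsRealClass r A → ¬ Set.InjOn (md d) A → A ⊆ ratC

/-!
A limit of leaves of a forward-invariant rational lamination never joins a rational angle to an
irrational one (Kiwi), so a class of the real extension is either a rational class or a set of
irrational angles lying in a single unlinked class.

Let `μ` be the tuning, and suppose that irrational angles `x ≠ y` are `μ̂`-equivalent with
`d • x = d • y`. They lie in one `λ₀`-unlinked class `w`. If `w` is finite, it is in a `λ̂₀`-class,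
against the post-critical finiteness of `λ₀`. Otherwise `w` is Fatou critical, and collapsing the
gaps of `w` by `α w` carries `μ` into `λ_w`; thus `α w x` and `α w y` are `λ̂_w`-equivalent with the
same image under multiplication by the degree. As `λ_w` is post-critically finite, either
`α w x = α w y`, and `x`, `y` are `λ̂₀`-equivalent, or `α w x` is rational. In the latter case the
return orbit of `x` to Fatou critical classes repeats an internal angle, which produces a limit leaf
inside a periodic unlinked class; expansion makes its images long enough to separate nearby points
of that class.

In the hyperbolic case, the remaining critical classes are rational. Two `μ`-equivalent rational
angles `x`, `y` in different `λ₀`-classes are joined by a chain of links through unlinked classes,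
consecutive ones distinct. As multiplication by `d` does not fold this chain, `d • y` stays in a
component of the complement of the `λ₀`-class of `d • x`.
-/

open Filter Topology

/-! ### Lifting the circle to the line -/

/-- The angle in `ℝ/ℤ` represented by a real number; intervals of `ℝ` of length at most one are
used throughout as coordinates on arcs of the circle. -/
abbrev angle (t : ℝ) : Circle1 := (t : Circle1)

lemma continuous_angle : Continuous angle := AddCircle.continuous_mk' 1

lemma isOpenMap_angle : IsOpenMap angle := QuotientAddGroup.isOpenMap_coe

lemma angle_eq_angle_iff {s t : ℝ} : angle s = angle t ↔ ∃ n : ℤ, t = s + n := by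
  rw [eq_comm, ← sub_eq_zero, ← AddCircle.coe_sub, AddCircle.coe_eq_zero_iff]
  simp only [zsmul_eq_mul, mul_one, eq_comm (b := t - s), sub_eq_iff_eq_add']

lemma angle_add_intCast (s : ℝ) (n : ℤ) : angle (s + n) = angle s :=
  (angle_eq_angle_iff.2 ⟨n, rfl⟩).symm

lemma angle_add_one (s : ℝ) : angle (s + 1) = angle s := AddCircle.coe_add_period 1 s

lemma eq_of_angle_eq_of_abs_sub_lt {s t : ℝ} (h : angle s = angle t) (hst : |s - t| < 1) :
    s = t := by
  obtain ⟨n, rfl⟩ := angle_eq_angle_iff.1 h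
  have hn : |(n : ℝ)| < 1 := by simpa using hst
  have hn0 : n = 0 := Int.abs_lt_one_iff.1 (by exact_mod_cast hn)
  simp [hn0]

lemma exists_mem_Ico_angle_eq (x : Circle1) (a : ℝ) : ∃ t ∈ Ico a (a + 1), angle t = x := by
  have hx : x ∈ angle '' Ico a (a + 1) := (AddCircle.coe_image_Ico_eq (1 : ℝ) a).symm ▸ mem_univ x
  exact hx

lemma exists_mem_Ioo_angle_eq {x : Circle1} {a : ℝ} (h : x ≠ angle a) :
    ∃ t ∈ Ioo a (a + 1), angle t = x := by
  obtain ⟨t, ht, rfl⟩ := exists_mem_Ico_angle_eq x a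
  exact ⟨t, ⟨ht.1.lt_of_ne fun hat ↦ h (by rw [hat]), ht.2⟩, rfl⟩

lemma map_angle_nhds (t : ℝ) : map angle (𝓝 t) = 𝓝 (angle t) :=
  isOpenMap_angle.map_nhds_eq continuous_angle.continuousAt

lemma angle_mem_closure_iff {S : Set Circle1} {t : ℝ} :
    angle t ∈ closure S ↔ ∃ᶠ s in 𝓝 t, angle s ∈ S := by
  rw [mem_closure_iff_frequently, ← map_angle_nhds, frequently_map]

lemma exists_angle_mem_of_mem_closure {S : Set Circle1} {t : ℝ} {U : Set ℝ}
    (h : angle t ∈ closure S) (hU : U ∈ 𝓝 t) : ∃ s ∈ U, angle s ∈ S :=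
  ((angle_mem_closure_iff.1 h).and_eventually hU).exists.imp fun _ hs ↦ hs.symm

lemma eventually_angle_notMem {B : Set Circle1} (hB : B.Finite) {t : ℝ} (ht : angle t ∉ B) :
    ∀ᶠ s in 𝓝 t, angle s ∉ B :=
  continuous_angle.continuousAt.eventually (hB.isClosed.isOpen_compl.mem_nhds ht)

lemma eventually_nhdsGT_angle_notMem {B : Set Circle1} (hB : B.Finite) (t : ℝ) :
    ∀ᶠ s in 𝓝[>] t, angle s ∉ B := by
  have hoff : ∀ᶠ s in 𝓝[>] t, angle s ∉ B \ {angle t} :=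
    eventually_nhdsWithin_of_eventually_nhds
      (eventually_angle_notMem (hB.subset sdiff_subset) fun h ↦ h.2 rfl)
  filter_upwards [hoff, Ioo_mem_nhdsGT (lt_add_one t)] with s hs hst hsB
  have hts : s = t := eq_of_angle_eq_of_abs_sub_lt (by simpa [hsB] using hs)
    (abs_lt.2 ⟨by linarith [hst.1], by linarith [hst.2]⟩)
  exact hst.1.ne' hts

/-! ### Components of the complement of a set of angles -/

lemma mem_connectedComponentIn_symm {X : Type*} [TopologicalSpace X] {F : Set X} {x y : X}
    (h : y ∈ connectedComponentIn F x) : x ∈ connectedComponentIn F y := by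
  rw [← connectedComponentIn_eq h]
  exact mem_connectedComponentIn (connectedComponentIn_nonempty_iff.1 ⟨y, h⟩)

lemma mem_connectedComponentIn_trans {X : Type*} [TopologicalSpace X] {F : Set X} {x y z : X}
    (hxy : y ∈ connectedComponentIn F x) (hyz : z ∈ connectedComponentIn F y) :
    z ∈ connectedComponentIn F x := by
  rwa [connectedComponentIn_eq hxy]

lemma angle_mem_connectedComponentIn {F : Set Circle1} {u u' : ℝ}
    (hF : ∀ t ∈ uIcc u u', angle t ∈ F) : angle u' ∈ connectedComponentIn F (angle u) :=
  (isPreconnected_uIcc.image angle continuous_angle.continuousOn).subset_connectedComponentIn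
    (mem_image_of_mem angle left_mem_uIcc) (image_subset_iff.2 hF)
    (mem_image_of_mem angle right_mem_uIcc)

lemma exists_mem_Ioo_angle_mem_of_notMem_connectedComponentIn {B : Set Circle1} {u u' : ℝ}
    (huu' : u ≤ u') (hu : angle u ∉ B) (hu' : angle u' ∉ B)
    (hsep : angle u' ∉ connectedComponentIn Bᶜ (angle u)) : ∃ b ∈ Ioo u u', angle b ∈ B := by
  by_contra! hB
  refine hsep (angle_mem_connectedComponentIn fun t ht htB ↦ ?_)
  rw [uIcc_of_le huu'] at ht
  refine hB t ⟨ht.1.lt_of_ne ?_, ht.2.lt_of_ne ?_⟩ htB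
  · rintro rfl; exact hu htB
  · rintro rfl; exact hu' htB

lemma exists_mem_both_Ioo_of_notMem_connectedComponentIn {B : Set Circle1} {u u' : ℝ}
    (huu' : u ≤ u') (hu'u : u' ≤ u + 1) (hu : angle u ∉ B) (hu' : angle u' ∉ B)
    (hsep : angle u' ∉ connectedComponentIn Bᶜ (angle u)) :
    (∃ b ∈ Ioo u u', angle b ∈ B) ∧ ∃ b ∈ Ioo u' (u + 1), angle b ∈ B := by
  refine ⟨exists_mem_Ioo_angle_mem_of_notMem_connectedComponentIn huu' hu hu' hsep,
    exists_mem_Ioo_angle_mem_of_notMem_connectedComponentIn hu'u hu' ?_ ?_⟩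
  · rwa [angle_add_one]
  · rw [angle_add_one]
    exact fun h ↦ hsep (mem_connectedComponentIn_symm h)

lemma angle_mem_or_mem_of_isPreconnected {K : Set Circle1} (hK : IsPreconnected K) {a b c e : ℝ}
    (hab : a < b) (hbc : b < c) (hce : c < e) (hea : e < a + 1) (hb : angle b ∈ K)
    (he : angle e ∈ K) : angle a ∈ K ∨ angle c ∈ K := by
  by_contra! hcon
  have hcover : K ⊆ angle '' Ioo a c ∪ angle '' Ioo c (a + 1) := by
    intro x hx
    obtain ⟨t, ht, rfl⟩ := exists_mem_Ioo_angle_eq (show x ≠ angle a by rintro rfl; exact hcon.1 hx)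
    rcases lt_trichotomy t c with htc | rfl | hct
    · exact Or.inl ⟨t, ⟨ht.1, htc⟩, rfl⟩
    · exact absurd hx hcon.2
    · exact Or.inr ⟨t, ⟨hct, ht.2⟩, rfl⟩
  obtain ⟨_, -, ⟨t, ht, rfl⟩, t', ht', htt'⟩ := hK _ _ (isOpenMap_angle _ isOpen_Ioo)
    (isOpenMap_angle _ isOpen_Ioo) hcover ⟨_, hb, b, ⟨hab, hbc⟩, rfl⟩ ⟨_, he, e, ⟨hce, hea⟩, rfl⟩
  have : t' = t := eq_of_angle_eq_of_abs_sub_lt htt'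
    (abs_lt.2 ⟨by linarith [ht.2, ht'.1], by linarith [ht.1, ht'.2]⟩)
  linarith [ht.2, ht'.1]

lemma angle_notMem_connectedComponentIn {B : Set Circle1} {a b c e : ℝ} (hab : a < b) (hbc : b < c)
    (hce : c < e) (hea : e < a + 1) (ha : angle a ∈ B) (hc : angle c ∈ B) :
    angle e ∉ connectedComponentIn Bᶜ (angle b) := by
  intro he
  have hb := mem_connectedComponentIn (connectedComponentIn_nonempty_iff.1 ⟨_, he⟩)
  rcases angle_mem_or_mem_of_isPreconnected isPreconnected_connectedComponentIn hab hbc hce hea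
    hb he with h | h
  · exact connectedComponentIn_subset _ _ h ha
  · exact connectedComponentIn_subset _ _ h hc

lemma exists_mem_connectedComponentIn_of_mem_closure {B S : Set Circle1} (hB : B.Finite)
    {x : Circle1} (hx : x ∈ closure S) (hxB : x ∉ B) : ∃ y ∈ S, y ∈ connectedComponentIn Bᶜ x := by
  obtain ⟨t, -, rfl⟩ := exists_mem_Ico_angle_eq x 0
  obtain ⟨ε, hε, hball⟩ := Metric.eventually_nhds_iff_ball.1 (eventually_angle_notMem hB hxB)
  obtain ⟨s, hs, hsS⟩ := exists_angle_mem_of_mem_closure hx (Metric.ball_mem_nhds t hε)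
  refine ⟨angle s, hsS, angle_mem_connectedComponentIn fun u hu ↦ hball u ?_⟩
  exact (convex_ball t ε).ordConnected.uIcc_subset (Metric.mem_ball_self hε) hs hu

/-! ### Rational angles and multiplication by `d` -/

lemma mem_ratC_iff_isOfFinAddOrder {x : Circle1} : x ∈ ratC ↔ IsOfFinAddOrder x := by
  induction x using QuotientAddGroup.induction_on with
  | H t =>
    refine Iff.trans ?_ (AddCircle.isOfFinAddOrder_iff_exists_rat_eq_div (p := (1 : ℝ))).symm
    constructor
    · rintro ⟨q, hq⟩
      obtain ⟨n, hn⟩ := angle_eq_angle_iff.1 (show angle t = angle q from hq)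
      exact ⟨q - n, by push_cast; linarith⟩
    · rintro ⟨q, hq⟩
      exact ⟨q, by rw [hq, div_one]⟩

lemma countable_setOf_angle_mem_ratC : {t : ℝ | angle t ∈ ratC}.Countable := by
  refine (countable_range ((↑) : ℚ → ℝ)).mono ?_
  rintro t ⟨q, hq⟩
  obtain ⟨n, hn⟩ := angle_eq_angle_iff.1 (show angle t = angle q from hq)
  exact ⟨q - n, by push_cast; linarith⟩

lemma nsmul_mem_ratC_iff {n : ℕ} (hn : n ≠ 0) {x : Circle1} : n • x ∈ ratC ↔ x ∈ ratC := by
  simp [mem_ratC_iff_isOfFinAddOrder, isOfFinAddOrder_nsmul, hn]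

lemma md_angle (d : ℕ) (t : ℝ) : md d (angle t) = angle (d * t) := by
  rw [md, ← AddCircle.coe_nsmul, nsmul_eq_mul]

lemma continuous_md (d : ℕ) : Continuous (md d) := continuous_const_smul d

lemma iterate_md (d n : ℕ) (x : Circle1) : (md d)^[n] x = d ^ n • x := smul_iterate_apply d n x

lemma iterate_md_mem_closure_image (d n : ℕ) {s : Set Circle1} {x : Circle1} (hx : x ∈ closure s) :
    (md d)^[n] x ∈ closure ((md d)^[n] '' s) :=
  image_closure_subset_closure_image ((continuous_md d).iterate n) (mem_image_of_mem _ hx)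

section

variable {d : ℕ} (hd : 2 ≤ d) {x : Circle1}
include hd

lemma md_mem_ratC_iff : md d x ∈ ratC ↔ x ∈ ratC := nsmul_mem_ratC_iff (by omega)

lemma iterate_md_mem_ratC_iff (n : ℕ) : (md d)^[n] x ∈ ratC ↔ x ∈ ratC := by
  rw [iterate_md]
  exact nsmul_mem_ratC_iff (by positivity)

lemma injective_iterate_md_of_notMem_ratC (hx : x ∉ ratC) : Injective fun n ↦ (md d)^[n] x := by
  rw [mem_ratC_iff_isOfFinAddOrder, ← injective_nsmul_iff_not_isOfFinAddOrder] at hx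
  intro m n hmn
  simp only [iterate_md] at hmn
  exact Nat.pow_right_injective hd (hx hmn)

end

/-! ### Rational laminations and their closures -/

/-- The closure of a relation in `(ℝ/ℤ)²`: pairs of angles that are limits of leaves of `r`. The
real extension `realExt r` is the equivalence relation it generates. -/
abbrev closureRel (r : Circle1 → Circle1 → Prop) (x y : Circle1) : Prop :=
  (x, y) ∈ closure {p : Circle1 × Circle1 | r p.1 p.2}

lemma closureRel_angle_iff {r : Circle1 → Circle1 → Prop} {s t : ℝ} :
    closureRel r (angle s) (angle t) ↔ ∃ᶠ p in 𝓝 (s, t), r (angle p.1) (angle p.2) := by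
  have hmap : map (Prod.map angle angle) (𝓝 (s, t)) = 𝓝 (angle s, angle t) :=
    (isOpenMap_angle.prodMap isOpenMap_angle).map_nhds_eq
      (continuous_angle.prodMap continuous_angle).continuousAt
  rw [closureRel, mem_closure_iff_frequently, ← hmap, frequently_map]
  rfl

lemma exists_rel_of_closureRel {r : Circle1 → Circle1 → Prop} {s t : ℝ} {U V : Set ℝ}
    (h : closureRel r (angle s) (angle t)) (hU : U ∈ 𝓝 s) (hV : V ∈ 𝓝 t) :
    ∃ a ∈ U, ∃ b ∈ V, r (angle a) (angle b) := by
  obtain ⟨p, hr, hp⟩ :=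
    ((closureRel_angle_iff.1 h).and_eventually (prod_mem_nhds hU hV)).exists
  exact ⟨p.1, hp.1, p.2, hp.2, hr⟩

lemma realExt_of_rel {r : Circle1 → Circle1 → Prop} {x y : Circle1} (h : r x y) : realExt r x y :=
  Relation.EqvGen.rel _ _ (subset_closure h)

namespace RatLam

variable (L : RatLam) {x y z : Circle1}

lemma closureRel_symm (h : closureRel L.rel x y) : closureRel L.rel y x :=
  map_mem_closure (f := Prod.swap) (t := {p : Circle1 × Circle1 | L.rel p.1 p.2}) continuous_swap h
    fun _ hp ↦ L.symm _ _ hp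

lemma relClass_eq (h : L.rel x y) : relClass L.rel x = relClass L.rel y :=
  ext fun _ ↦ ⟨L.trans _ _ _ (L.symm _ _ h), L.trans _ _ _ h⟩

lemma notMem_relClass (hx : x ∉ ratC) : x ∉ relClass L.rel z :=
  fun h ↦ hx (L.rel_rat _ _ h).2

lemma rel_of_crossing {a b c e : ℝ} (hab : a < b) (hbc : b < c) (hce : c < e) (hea : e < a + 1)
    (hac : L.rel (angle a) (angle c)) (hbe : L.rel (angle b) (angle e)) :
    L.rel (angle a) (angle b) := by
  by_contra hn
  obtain ⟨x, -, hsub⟩ := L.unlinkedClass _ _ hn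
  refine angle_notMem_connectedComponentIn hab hbc hce hea (L.refl _ (L.rel_rat _ _ hac).1) hac ?_
  exact mem_connectedComponentIn_trans
    (mem_connectedComponentIn_symm (hsub (L.refl _ (L.rel_rat _ _ hbe).1))) (hsub hbe)

lemma exists_rel_not_rel_of_closureRel {s t : ℝ} {U V : Set ℝ}
    (h : closureRel L.rel (angle s) (angle t)) (ht : angle t ∉ ratC) (hU : U ∈ 𝓝 s) (hV : V ∈ 𝓝 t)
    (x : Circle1) : ∃ a ∈ U, ∃ b ∈ V, L.rel (angle a) (angle b) ∧ ¬ L.rel x (angle b) := by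
  have hoff : ∀ᶠ b in 𝓝 t, angle b ∉ relClass L.rel x :=
    eventually_angle_notMem (L.finiteClass x) (L.notMem_relClass ht)
  obtain ⟨a, ha, b, hb, hab⟩ := exists_rel_of_closureRel h hU (inter_mem hV hoff)
  exact ⟨a, ha, b, hb.1, hab, hb.2⟩

/-- A leaf near the middle limit misses the class of `q`, so it starts strictly to one side of `q`;
on that side it crosses a leaf near one of the outer limits. -/
lemma not_three_irrational_closureRel {q z₁ z₂ z₃ : ℝ} (h₁ : angle z₁ ∉ ratC)
    (h₂ : angle z₂ ∉ ratC) (h₃ : angle z₃ ∉ ratC) (hq₁ : q < z₁) (h₁₂ : z₁ < z₂) (h₂₃ : z₂ < z₃)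
    (h₃q : z₃ < q + 1) (c₁ : closureRel L.rel (angle q) (angle z₁))
    (c₂ : closureRel L.rel (angle q) (angle z₂)) :
    ¬ closureRel L.rel (angle q) (angle z₃) := by
  intro c₃
  obtain ⟨a, ha, b, hb, hab, hqb⟩ := L.exists_rel_not_rel_of_closureRel c₂ h₂
    (Ioo_mem_nhds (by linarith : z₃ - 1 < q) hq₁) (Ioo_mem_nhds h₁₂ h₂₃) (angle q)
  obtain ⟨ha₃, ha₁⟩ := ha
  have haq : a ≠ q := by rintro rfl; exact hqb hab
  rcases haq.lt_or_gt with hlt | hgt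
  · obtain ⟨a', ha', b', hb', hab', hab''⟩ := L.exists_rel_not_rel_of_closureRel c₃ h₃
      (Ioo_mem_nhds hlt hq₁) (Ioo_mem_nhds hb.2 (by linarith : z₃ < a + 1)) (angle a)
    have haa' := L.rel_of_crossing ha'.1 (ha'.2.trans hb.1) hb'.1 hb'.2 hab hab'
    exact hab'' (L.trans _ _ _ haa' hab')
  · obtain ⟨a', ha', b', hb', hab', hab''⟩ := L.exists_rel_not_rel_of_closureRel c₁ h₁
      (Ioo_mem_nhds (by linarith : z₃ - 1 < q) hgt) (Ioo_mem_nhds ha₁ hb.1) (angle a)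
    have ha'a := L.rel_of_crossing ha'.2 hb'.1 hb'.2 (by linarith [hb.2, ha'.1]) hab' hab
    exact hab'' (L.trans _ _ _ (L.symm _ _ ha'a) hab')

end RatLam

lemma exists_lt_lt_of_infinite {α : Type*} [LinearOrder α] {S : Set α} (hS : S.Infinite) :
    ∃ a ∈ S, ∃ b ∈ S, ∃ c ∈ S, a < b ∧ b < c := by
  obtain ⟨t, ht, hcard⟩ := hS.exists_subset_card_eq 3
  let f := t.orderEmbOfFin hcard
  have hf (i : Fin 3) : f i ∈ S := ht (t.orderEmbOfFin_mem hcard i)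
  exact ⟨f 0, hf 0, f 1, hf 1, f 2, hf 2, f.strictMono (by decide), f.strictMono (by decide)⟩

lemma exists_infinite_inter_preimage_singleton {α β : Type*} {S : Set α} (hS : S.Infinite)
    {t : Set β} (ht : t.Finite) {f : α → β} (hf : MapsTo f S t) :
    ∃ y ∈ t, (S ∩ f ⁻¹' {y}).Infinite := by
  by_contra! hfin
  exact hS ((ht.biUnion hfin).subset fun x hx ↦ mem_biUnion (hf hx) ⟨hx, rfl⟩)

lemma RatLam.finite_setOf_notMem_ratC_closureRel (L : RatLam) {q : Circle1} (hq : q ∈ ratC) :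
    {z | z ∉ ratC ∧ closureRel L.rel q z}.Finite := by
  by_contra hinf
  obtain ⟨q, -, rfl⟩ := exists_mem_Ico_angle_eq q 0
  have hlift :
      {t ∈ Ioo q (q + 1) | angle t ∉ ratC ∧ closureRel L.rel (angle q) (angle t)}.Infinite := by
    refine Infinite.of_image angle (Set.Infinite.mono ?_ hinf)
    rintro z ⟨hz, hqz⟩
    obtain ⟨t, ht, rfl⟩ := exists_mem_Ioo_angle_eq (ne_of_mem_of_not_mem hq hz).symm
    exact ⟨t, ⟨ht, hz, hqz⟩, rfl⟩
  obtain ⟨a, ha, b, hb, c, hc, hab, hbc⟩ := exists_lt_lt_of_infinite hlift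
  exact L.not_three_irrational_closureRel ha.2.1 hb.2.1 hc.2.1 ha.1.1 hab hbc hc.1.2 ha.2.2 hb.2.2
    hc.2.2

namespace InvRatLam

variable {d : ℕ} (L : InvRatLam d) {x y : Circle1}

lemma rel_md (h : L.rel x y) : L.rel (md d x) (md d y) := by
  have hy : md d y ∈ md d '' relClass L.rel x := mem_image_of_mem _ h
  rwa [(L.invariant x (L.rel_rat _ _ h).1).1] at hy

lemma rel_iterate_md (n : ℕ) (h : L.rel x y) : L.rel ((md d)^[n] x) ((md d)^[n] y) := by
  induction n with
  | zero => exact h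
  | succ n ih => simpa only [iterate_succ_apply'] using L.rel_md ih

lemma closureRel_iterate_md (n : ℕ) (h : closureRel L.rel x y) :
    closureRel L.rel ((md d)^[n] x) ((md d)^[n] y) :=
  map_mem_closure (f := Prod.map _ _) (t := {p : Circle1 × Circle1 | L.rel p.1 p.2})
    (((continuous_md d).iterate n).prodMap ((continuous_md d).iterate n)) h
    fun _ hp ↦ L.rel_iterate_md n hp

lemma realExt_iterate_md (n : ℕ) (h : realExt L.rel x y) :
    realExt L.rel ((md d)^[n] x) ((md d)^[n] y) := by
  induction h with
  | rel x y h => exact Relation.EqvGen.rel _ _ (L.closureRel_iterate_md n h)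
  | refl x => exact Relation.EqvGen.refl _
  | symm x y _ ih => exact ih.symm
  | trans x y z _ _ ihxy ihyz => exact ihxy.trans _ _ _ ihyz

section

variable (hd : 2 ≤ d)
include hd

/-- Kiwi's argument: some point of the finite orbit of `x` would be the limit partner of infinitely
many points of the orbit of an irrational `y`. -/
lemma mem_ratC_of_closureRel (hx : x ∈ ratC) (h : closureRel L.rel x y) : y ∈ ratC := by
  by_contra hy
  have hfin := (mem_ratC_iff_isOfFinAddOrder.1 hx).finite_multiples
  obtain ⟨z, -, hz⟩ := exists_infinite_inter_preimage_singleton infinite_univ hfin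
    (f := fun n ↦ (md d)^[n] x) fun n _ ↦ ⟨d ^ n, (iterate_md d n x).symm⟩
  have hz_rat : z ∈ ratC := by
    obtain ⟨n, -, rfl⟩ := hz.nonempty
    exact (iterate_md_mem_ratC_iff hd n).2 hx
  refine hz.image (injective_iterate_md_of_notMem_ratC hd hy).injOn
    ((L.finite_setOf_notMem_ratC_closureRel hz_rat).subset ?_)
  rintro _ ⟨n, ⟨-, rfl⟩, rfl⟩
  exact ⟨(iterate_md_mem_ratC_iff hd n).not.2 hy, L.closureRel_iterate_md n h⟩

lemma rel_of_closureRel (hx : x ∈ ratC) (h : closureRel L.rel x y) : L.rel x y :=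
  L.closed' _ hx _ (L.mem_ratC_of_closureRel hd hx h) h

lemma rel_of_realExt (h : realExt L.rel x y) (hxy : x ∈ ratC ∨ y ∈ ratC) : L.rel x y := by
  induction h with
  | rel x y h =>
    rcases hxy with hx | hy
    · exact L.rel_of_closureRel hd hx h
    · exact L.symm _ _ (L.rel_of_closureRel hd hy (L.closureRel_symm h))
  | refl x => exact L.refl x (hxy.elim id id)
  | symm x y _ ih => exact L.symm _ _ (ih hxy.symm)
  | trans x y z _ _ ihxy ihyz =>
    rcases hxy with hx | hz
    · have hxy := ihxy (.inl hx)
      exact L.trans _ _ _ hxy (ihyz (.inl (L.rel_rat _ _ hxy).2))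
    · have hyz := ihyz (.inr hz)
      exact L.trans _ _ _ (ihxy (.inr (L.rel_rat _ _ hyz).1)) hyz

lemma mem_ratC_iff_of_realExt (h : realExt L.rel x y) : x ∈ ratC ↔ y ∈ ratC :=
  ⟨fun hx ↦ (L.rel_rat _ _ (L.rel_of_realExt hd h (.inl hx))).2,
    fun hy ↦ (L.rel_rat _ _ (L.rel_of_realExt hd h (.inr hy))).1⟩

end

end InvRatLam

/-! ### Unlinked classes -/

namespace UnlRel

variable {L : RatLam} {x y z : Circle1}

lemma refl {r : Circle1 → Circle1 → Prop} (hx : x ∉ ratC) : UnlRel r x x := ⟨hx, hx, .inl rfl⟩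

lemma mem_connectedComponentIn (h : UnlRel L.rel x y) (hz : z ∈ ratC) :
    y ∈ connectedComponentIn (relClass L.rel z)ᶜ x := by
  rcases h.2.2 with rfl | hcomp
  · exact _root_.mem_connectedComponentIn (L.notMem_relClass h.1)
  · exact hcomp z hz

lemma symm (h : UnlRel L.rel x y) : UnlRel L.rel y x :=
  ⟨h.2.1, h.1, .inr fun _ hz ↦ mem_connectedComponentIn_symm (h.mem_connectedComponentIn hz)⟩

lemma trans (hxy : UnlRel L.rel x y) (hyz : UnlRel L.rel y z) : UnlRel L.rel x z :=
  ⟨hxy.1, hyz.2.1, .inr fun _ hu ↦ mem_connectedComponentIn_trans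
    (hxy.mem_connectedComponentIn hu) (hyz.mem_connectedComponentIn hu)⟩

lemma of_crossing {a b c e : ℝ} (hab : a < b) (hbc : b < c) (hce : c < e) (hea : e < a + 1)
    (hac : UnlRel L.rel (angle a) (angle c)) (hbe : UnlRel L.rel (angle b) (angle e)) :
    UnlRel L.rel (angle a) (angle b) := by
  refine ⟨hac.1, hbe.1, .inr fun z hz ↦ ?_⟩
  by_contra hn
  obtain ⟨⟨p, hp, hpz⟩, q, hq, hqz⟩ := exists_mem_both_Ioo_of_notMem_connectedComponentIn hab.le
    (by linarith) (L.notMem_relClass hac.1) (L.notMem_relClass hbe.1) hn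
  rcases lt_trichotomy q c with hqc | rfl | hcq
  · exact angle_notMem_connectedComponentIn hp.2 hq.1 (hqc.trans hce) (by linarith [hp.1]) hpz hqz
      (hbe.mem_connectedComponentIn hz)
  · exact L.notMem_relClass hac.2.1 hqz
  · refine angle_notMem_connectedComponentIn (c := p + 1) (e := c + 1) hq.2
      (by linarith [hp.1]) (by linarith [hp.2]) (by linarith) hqz (by rwa [angle_add_one]) ?_
    rw [angle_add_one, angle_add_one]
    exact hac.mem_connectedComponentIn hz

lemma of_closureRel (hx : x ∉ ratC) (hy : y ∉ ratC) (h : closureRel L.rel x y) :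
    UnlRel L.rel x y := by
  refine ⟨hx, hy, .inr fun z _ ↦ ?_⟩
  by_contra hn
  obtain ⟨x, -, rfl⟩ := exists_mem_Ico_angle_eq x 0
  obtain ⟨y, hxy, rfl⟩ := exists_mem_Ico_angle_eq y x
  obtain ⟨⟨p, hp, hzp⟩, q, hq, hzq⟩ := exists_mem_both_Ioo_of_notMem_connectedComponentIn hxy.1
    hxy.2.le (L.notMem_relClass hx) (L.notMem_relClass hy) hn
  obtain ⟨a, ha, b, hb, hab, hzb⟩ := L.exists_rel_not_rel_of_closureRel h hy
    (Ioo_mem_nhds (by linarith [hq.2] : q - 1 < x) hp.1) (Ioo_mem_nhds hp.2 hq.1) z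
  have hap := L.rel_of_crossing ha.2 hb.1 hb.2 (by linarith [ha.1]) hab
    (L.trans _ _ _ (L.symm _ _ hzp) hzq)
  exact hzb (L.trans _ _ _ hzp (L.trans _ _ _ (L.symm _ _ hap) hab))

end UnlRel

lemma RatLam.not_unlRel_of_closureRel_between (L : RatLam) {z u c u' : ℝ} (hzu : z < u)
    (huc : u < c) (hcu' : c < u') (hu'z : u' < z + 1) (hzc : closureRel L.rel (angle z) (angle c)) :
    ¬ UnlRel L.rel (angle u) (angle u') := by
  intro huu'
  obtain ⟨a, ha, b, hb, hab⟩ := exists_rel_of_closureRel hzc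
    (Ioo_mem_nhds (by linarith : u' - 1 < z) hzu) (Ioo_mem_nhds huc hcu')
  have ha_rat := (L.rel_rat _ _ hab).1
  exact angle_notMem_connectedComponentIn ha.2 hb.1 hb.2 (by linarith [ha.1]) (L.refl _ ha_rat) hab
    (huu'.mem_connectedComponentIn ha_rat)

lemma InvRatLam.unlRel_of_realExt {d : ℕ} (hd : 2 ≤ d) (L : InvRatLam d) {x y : Circle1}
    (h : realExt L.rel x y) (hx : x ∉ ratC) : UnlRel L.rel x y := by
  induction h with
  | rel x y h =>
    exact .of_closureRel hx ((L.mem_ratC_iff_of_realExt hd (.rel _ _ h)).not.1 hx) h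
  | refl x => exact .refl hx
  | symm x y h ih => exact (ih ((L.mem_ratC_iff_of_realExt hd h).not.2 hx)).symm
  | trans x y z hxy _ ihxy ihyz =>
    exact (ihxy hx).trans (ihyz ((L.mem_ratC_iff_of_realExt hd hxy).not.1 hx))

namespace IsUnlClass

variable {L : RatLam} {w w' : Set Circle1} {x y : Circle1}

lemma nonempty {r : Circle1 → Circle1 → Prop} (hw : IsUnlClass r w) : w.Nonempty := by
  obtain ⟨θ, hθ, rfl⟩ := hw
  exact ⟨θ, .refl hθ⟩

lemma notMem_ratC {r : Circle1 → Circle1 → Prop} (hw : IsUnlClass r w) (hx : x ∈ w) : x ∉ ratC := by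
  obtain ⟨θ, -, rfl⟩ := hw
  exact hx.2.1

lemma mem_iff_unlRel (hw : IsUnlClass L.rel w) (hx : x ∈ w) : y ∈ w ↔ UnlRel L.rel x y := by
  obtain ⟨θ, -, rfl⟩ := hw
  exact ⟨fun hy ↦ (UnlRel.symm hx).trans hy, fun hxy ↦ UnlRel.trans hx hxy⟩

lemma eq_of_unlRel (hw : IsUnlClass L.rel w) (hw' : IsUnlClass L.rel w') (hx : x ∈ w)
    (hy : y ∈ w') (h : UnlRel L.rel x y) : w = w' := by
  ext z
  rw [hw.mem_iff_unlRel hx, hw'.mem_iff_unlRel hy]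
  exact ⟨h.symm.trans, h.trans⟩

end IsUnlClass

/-! ### Gaps of an unlinked class -/

/-- A leaf of `L` with both ends in `[s, t]` encloses `u` and `v` together. It measures how far a
gap `(s, t)` of an unlinked class is filled by leaves; `u = v` is allowed. -/
def RatLam.CoEnclosed (L : RatLam) (s t u v : ℝ) : Prop :=
  ∃ c c', L.rel (angle c) (angle c') ∧ s ≤ c ∧ c' ≤ t ∧ u ∈ Ioo c c' ∧ v ∈ Ioo c c'

namespace RatLam.CoEnclosed

variable {L : RatLam} {s t u v x : ℝ}

lemma symm (h : L.CoEnclosed s t u v) : L.CoEnclosed s t v u := by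
  obtain ⟨c, c', hcc', hc, hc', hu, hv⟩ := h
  exact ⟨c, c', hcc', hc, hc', hv, hu⟩

lemma eventually_nhds (h : L.CoEnclosed s t u u) : ∀ᶠ v in 𝓝 u, L.CoEnclosed s t u v := by
  obtain ⟨c, c', hcc', hc, hc', hu, -⟩ := h
  filter_upwards [Ioo_mem_nhds hu.1 hu.2] with v hv
  exact ⟨c, c', hcc', hc, hc', hu, hv⟩

lemma isOpen_setOf_self : IsOpen {u | L.CoEnclosed s t u u} := by
  refine isOpen_iff_eventually.2 fun u hu ↦ hu.eventually_nhds.mono fun v hv ↦ ?_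
  obtain ⟨c, c', hcc', hc, hc', -, hv⟩ := hv
  exact ⟨c, c', hcc', hc, hc', hv, hv⟩

lemma trans (hst : t < s + 1) (huv : L.CoEnclosed s t u v) (hvx : L.CoEnclosed s t v x) :
    L.CoEnclosed s t u x := by
  obtain ⟨c, c', hcc', hc, hc', hu, hv⟩ := huv
  obtain ⟨e, e', hee', he, he', hv', hx⟩ := hvx
  rcases le_total c e with hce | hec <;> rcases le_or_gt e' c' with hec' | hce'
  · exact ⟨c, c', hcc', hc, hc', hu, by linarith [hx.1], by linarith [hx.2]⟩
  · refine ⟨c, e', ?_, hc, he', ⟨hu.1, by linarith [hu.2]⟩, by linarith [hx.1], hx.2⟩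
    rcases hce.eq_or_lt with rfl | hce
    · exact hee'
    · have := L.rel_of_crossing hce (by linarith [hv.2, hv'.1]) hce' (by linarith) hcc' hee'
      exact L.trans _ _ _ this hee'
  · refine ⟨e, c', ?_, he, hc', ⟨by linarith [hu.1], hu.2⟩, hx.1, by linarith [hx.2]⟩
    rcases hec.eq_or_lt with rfl | hec
    · exact hcc'
    rcases hec'.eq_or_lt with rfl | hec'
    · exact hee'
    · have := L.rel_of_crossing hec (by linarith [hv.1, hv'.2]) hec' (by linarith) hee' hcc'
      exact L.trans _ _ _ this hcc'
  · exact ⟨e, e', hee', he, he', ⟨by linarith [hu.1], by linarith [hu.2]⟩, hx⟩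

lemma of_forall_mem_Icc (hst : t < s + 1) (huv : u ≤ v)
    (h : ∀ x ∈ Icc u v, L.CoEnclosed s t x x) : L.CoEnclosed s t u v :=
  isPreconnected_Icc.induction₂ (L.CoEnclosed s t)
    (fun x hx ↦ mem_nhdsWithin_of_mem_nhds (h x hx).eventually_nhds)
    (fun _ _ _ _ _ _ hxy hyz ↦ hxy.trans hst hyz) (fun _ _ _ _ hxy ↦ hxy.symm)
    (left_mem_Icc.2 huv) (right_mem_Icc.2 huv)

end RatLam.CoEnclosed

lemma exists_eventually_mem_imp_eq_of_countable {X : Type*} [TopologicalSpace X] [R1Space X]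
    [T1Space X] [LocallyCompactSpace X] {K : Set X} (hK : IsLocallyClosed K) (hc : K.Countable)
    (hne : K.Nonempty) : ∃ k ∈ K, ∀ᶠ x in 𝓝 k, x ∈ K → x = k := by
  have := hK.locallyCompactSpace
  have := hc.to_subtype
  have := hne.to_subtype
  obtain ⟨k, x, hx⟩ := nonempty_interior_of_iUnion_of_closed (f := fun k : K ↦ {k})
    (fun k ↦ isClosed_singleton) (by ext; simp)
  have hxk : x = k := by simpa using interior_subset hx
  subst hxk
  have hx_nhds : ∀ᶠ y in 𝓝 x, y = x := mem_interior_iff_mem_nhds.1 hx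
  rw [nhds_subtype, eventually_comap] at hx_nhds
  exact ⟨x, x.2, hx_nhds.mono fun y hy hyK ↦ congrArg Subtype.val (hy ⟨y, hyK⟩ rfl)⟩

lemma exists_closureRel_of_frequently {r : Circle1 → Circle1 → Prop} {K : Set ℝ}
    (hK : IsCompact K) {k : ℝ} (h : ∃ᶠ k' in 𝓝 k, ∃ e ∈ K, r (angle k') (angle e)) :
    ∃ e ∈ K, closureRel r (angle k) (angle e) := by
  by_contra! hK'
  simp only [closureRel_angle_iff, not_frequently] at hK'
  refine h ?_
  filter_upwards [hK.eventually_forall_of_forall_eventually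
    (P := fun k e ↦ ¬ r (angle k) (angle e)) hK'] with k' hk' ⟨e, he, hke⟩
  exact hk' e he hke

namespace RatLam

variable {L : RatLam} {s t : ℝ}

lemma exists_mem_Ico_closureRel_of_coEnclosed (hst : t < s + 1) {l k : ℝ} (hlk : l < k)
    (h : ∀ u ∈ Ioo l k, L.CoEnclosed s t u u) (hk : ¬ L.CoEnclosed s t k k) :
    ∃ e ∈ Ico s k, closureRel L.rel (angle k) (angle e) := by
  obtain ⟨a, hla, hak⟩ := exists_between hlk
  suffices ∃ᶠ k' in 𝓝 k, ∃ e ∈ Icc s a, L.rel (angle k') (angle e) by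
    obtain ⟨e, he, hke⟩ := exists_closureRel_of_frequently isCompact_Icc this
    exact ⟨e, ⟨he.1, he.2.trans_lt hak⟩, hke⟩
  rw [frequently_iff]
  intro U hU
  obtain ⟨b, hbk, hbU⟩ := exists_Ioc_subset_of_mem_nhds hU ⟨l, hlk⟩
  obtain ⟨c, c', hcc', hc, hc', ha, hab⟩ :=
    CoEnclosed.of_forall_mem_Icc hst (le_max_left a b) fun u hu ↦
      h u ⟨hla.trans_le hu.1, hu.2.trans_lt (max_lt hak hbk)⟩
  have hc'k : c' ≤ k := le_of_not_gt fun hkc' ↦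
    hk ⟨c, c', hcc', hc, hc', ⟨ha.1.trans hak, hkc'⟩, ha.1.trans hak, hkc'⟩
  exact ⟨c', hbU ⟨(le_max_right a b).trans_lt hab.2, hc'k⟩, c, ⟨hc, ha.1.le⟩, L.symm _ _ hcc'⟩

lemma exists_mem_Ioc_closureRel_of_coEnclosed (hst : t < s + 1) {k r : ℝ} (hkr : k < r)
    (h : ∀ u ∈ Ioo k r, L.CoEnclosed s t u u) (hk : ¬ L.CoEnclosed s t k k) :
    ∃ e ∈ Ioc k t, closureRel L.rel (angle k) (angle e) := by
  obtain ⟨a, hka, har⟩ := exists_between hkr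
  suffices ∃ᶠ k' in 𝓝 k, ∃ e ∈ Icc a t, L.rel (angle k') (angle e) by
    obtain ⟨e, he, hke⟩ := exists_closureRel_of_frequently isCompact_Icc this
    exact ⟨e, ⟨hka.trans_le he.1, he.2⟩, hke⟩
  rw [frequently_iff]
  intro U hU
  obtain ⟨b, hkb, hbU⟩ := exists_Ico_subset_of_mem_nhds hU ⟨r, hkr⟩
  obtain ⟨c, c', hcc', hc, hc', hab, ha⟩ :=
    CoEnclosed.of_forall_mem_Icc hst (min_le_left a b) fun u hu ↦
      h u ⟨(lt_min hka hkb).trans_le hu.1, hu.2.trans_lt har⟩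
  have hkc : k ≤ c := le_of_not_gt fun hck ↦
    hk ⟨c, c', hcc', hc, hc', ⟨hck, hka.trans ha.2⟩, hck, hka.trans ha.2⟩
  exact ⟨c, hbU ⟨hkc, hab.1.trans_le (min_le_right a b)⟩, c', ⟨ha.2.le, hc'⟩, hcc'⟩

end RatLam

lemma IsUnlClass.exists_notMem_connectedComponentIn {L : RatLam} {w : Set Circle1}
    (hw : IsUnlClass L.rel w) {x : Circle1} (hx : x ∉ ratC) (hxw : x ∉ w) :
    ∃ z ∈ ratC, ∀ y ∈ w, y ∉ connectedComponentIn (relClass L.rel z)ᶜ x := by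
  obtain ⟨θ, hθ⟩ := hw.nonempty
  obtain ⟨z, hz, hxz⟩ : ∃ z ∈ ratC, x ∉ connectedComponentIn (relClass L.rel z)ᶜ θ := by
    by_contra! h
    exact hxw ((hw.mem_iff_unlRel hθ).2 ⟨hw.notMem_ratC hθ, hx, .inr h⟩)
  refine ⟨z, hz, fun y hy hyx ↦ hxz ?_⟩
  exact mem_connectedComponentIn_trans
    (((hw.mem_iff_unlRel hθ).1 hy).mem_connectedComponentIn hz) (mem_connectedComponentIn_symm hyx)

lemma IsUnlClass.coEnclosed {L : RatLam} {w : Set Circle1} (hw : IsUnlClass L.rel w) {s t u : ℝ}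
    (hs : angle s ∈ closure w) (ht : angle t ∈ closure w) (hsu : s < u) (hut : u < t)
    (hu : angle u ∉ ratC) (huw : angle u ∉ w) : L.CoEnclosed s t u u := by
  obtain ⟨z, -, hz⟩ := hw.exists_notMem_connectedComponentIn hu huw
  have hmeet {v : ℝ} (hv : angle v ∈ closure w) : ∃ c ∈ uIcc u v, L.rel z (angle c) := by
    by_contra! h
    obtain ⟨y, hy, hvy⟩ := exists_mem_connectedComponentIn_of_mem_closure (L.finiteClass z) hv
      (h v right_mem_uIcc)
    exact hz y hy (mem_connectedComponentIn_trans (angle_mem_connectedComponentIn h) hvy)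
  obtain ⟨c, hc, hzc⟩ := hmeet hs
  obtain ⟨c', hc', hzc'⟩ := hmeet ht
  rw [uIcc_of_ge hsu.le] at hc
  rw [uIcc_of_le hut.le] at hc'
  have hcu : c ≠ u := by rintro rfl; exact L.notMem_relClass hu hzc
  have hc'u : u ≠ c' := by rintro rfl; exact L.notMem_relClass hu hzc'
  have huc : u ∈ Ioo c c' := ⟨hc.2.lt_of_ne hcu, hc'.1.lt_of_ne hc'u⟩
  exact ⟨c, c', L.trans _ _ _ (L.symm _ _ hzc) hzc', hc.1, hc'.2, huc, huc⟩

namespace InvRatLam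

variable {d : ℕ} (hd : 2 ≤ d) (L : InvRatLam d) {s t : ℝ} {w : Set Circle1}
include hd

/-- The points not enclosed form a countable locally closed set; at an isolated one the enclosing
leaves on both sides accumulate, and their limits combine to a leaf enclosing it. -/
lemma coEnclosed_of_forall_notMem_ratC (hst : t < s + 1)
    (h : ∀ u ∈ Ioo s t, angle u ∉ ratC → L.CoEnclosed s t u u) {u : ℝ} (hu : u ∈ Ioo s t) :
    L.CoEnclosed s t u u := by
  by_contra hu_not
  obtain ⟨k, ⟨hk, hk_not⟩, hiso⟩ := exists_eventually_mem_imp_eq_of_countable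
    (K := Ioo s t ∩ {u | L.CoEnclosed s t u u}ᶜ)
    (isOpen_Ioo.isLocallyClosed.inter
      RatLam.CoEnclosed.isOpen_setOf_self.isClosed_compl.isLocallyClosed)
    (countable_setOf_angle_mem_ratC.mono fun u hu ↦ not_not.1 fun hu' ↦ hu.2 (h u hu.1 hu'))
    ⟨u, hu, hu_not⟩
  have hk_rat : angle k ∈ ratC := not_not.1 fun hk' ↦ hk_not (h k hk hk')
  have hnear : ∀ᶠ x in 𝓝 k, x ≠ k → L.CoEnclosed s t x x := by
    filter_upwards [hiso, Ioo_mem_nhds hk.1 hk.2] with x hx hxst hxk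
    exact not_not.1 fun hx' ↦ hxk (hx ⟨hxst, hx'⟩)
  obtain ⟨l, r, hlr, hsub⟩ := mem_nhds_iff_exists_Ioo_subset.1 hnear
  obtain ⟨e, he, hke⟩ := RatLam.exists_mem_Ico_closureRel_of_coEnclosed hst hlr.1
    (fun u hu ↦ hsub ⟨hu.1, hu.2.trans hlr.2⟩ hu.2.ne) hk_not
  obtain ⟨f, hf, hkf⟩ := RatLam.exists_mem_Ioc_closureRel_of_coEnclosed hst hlr.2
    (fun u hu ↦ hsub ⟨hlr.1.trans hu.1, hu.2⟩ hu.1.ne') hk_not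
  have hef : L.rel (angle e) (angle f) := L.trans _ _ _
    (L.symm _ _ (L.rel_of_closureRel hd hk_rat hke)) (L.rel_of_closureRel hd hk_rat hkf)
  exact hk_not ⟨e, f, hef, he.1, hf.2, ⟨he.2, hf.1⟩, he.2, hf.1⟩

lemma closureRel_of_gap (hw : IsUnlClass L.rel w) (hst : s < t) (hts : t < s + 1)
    (hs : angle s ∈ closure w) (ht : angle t ∈ closure w) (hfree : ∀ u ∈ Ioo s t, angle u ∉ w) :
    closureRel L.rel (angle s) (angle t) := by
  have hall (u : ℝ) (hu : u ∈ Ioo s t) : L.CoEnclosed s t u u :=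
    L.coEnclosed_of_forall_notMem_ratC hd hts
      (fun u hu hu_irr ↦ hw.coEnclosed hs ht hu.1 hu.2 hu_irr (hfree u hu)) hu
  rw [closureRel_angle_iff, frequently_iff]
  intro W hW
  obtain ⟨U, hU, V, hV, hUV⟩ := mem_nhds_prod_iff.1 hW
  obtain ⟨a, hsa, haU⟩ := exists_Ico_subset_of_mem_nhds hU ⟨t, hst⟩
  obtain ⟨b, hbt, hbV⟩ := exists_Ioc_subset_of_mem_nhds hV ⟨s, hst⟩
  obtain ⟨m, hsm, hmt⟩ := exists_between hst
  obtain ⟨c, c', hcc', hc, hc', hca, hbc'⟩ := RatLam.CoEnclosed.of_forall_mem_Icc hts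
    ((min_le_right a m).trans (le_max_right b m)) fun u hu ↦
      hall u ⟨(lt_min hsa hsm).trans_le hu.1, hu.2.trans_lt (max_lt hbt hmt)⟩
  exact ⟨(c, c'), hUV ⟨haU ⟨hc, hca.1.trans_le (min_le_left a m)⟩,
    hbV ⟨(le_max_left b m).trans_lt hbc'.2, hc'⟩⟩, hcc'⟩

lemma realExt_of_gap (hw : IsUnlClass L.rel w) (hst : s ≤ t) (hs : angle s ∈ closure w)
    (ht : angle t ∈ closure w) (hfree : ∀ u ∈ Ioo s t, angle u ∉ w) :
    realExt L.rel (angle s) (angle t) := by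
  rcases hst.eq_or_lt with rfl | hst
  · exact Relation.EqvGen.refl _
  rcases lt_trichotomy t (s + 1) with hts | rfl | hts
  · exact Relation.EqvGen.rel _ _ (L.closureRel_of_gap hd hw hst hts hs ht hfree)
  · rw [angle_add_one]
    exact Relation.EqvGen.refl _
  · exfalso
    obtain ⟨θ, hθ⟩ := hw.nonempty
    obtain ⟨u, hu, rfl⟩ := exists_mem_Ico_angle_eq θ s
    rcases hu.1.eq_or_lt with rfl | hsu
    · exact hfree (s + 1) ⟨by linarith, hts⟩ (by rwa [angle_add_one])
    · exact hfree u ⟨hsu, hu.2.trans hts⟩ hθ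

lemma realExt_of_mem_finite_unlClass (hw : IsUnlClass L.rel w) (hfin : w.Finite) {x y : Circle1}
    (hx : x ∈ w) (hy : y ∈ w) : realExt L.rel x y := by
  obtain ⟨s, -, rfl⟩ := exists_mem_Ico_angle_eq x 0
  obtain ⟨t, hst, rfl⟩ := exists_mem_Ico_angle_eq y s
  have hfin_lift : {u ∈ Icc s t | angle u ∈ w}.Finite := by
    refine Set.Finite.of_finite_image (f := angle) (hfin.subset ?_) fun a ha b hb hab ↦ ?_
    · rintro _ ⟨u, hu, rfl⟩
      exact hu.2
    · exact eq_of_angle_eq_of_abs_sub_lt hab ((abs_sub_le_of_le_of_le ha.1.1 ha.1.2 hb.1.1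
        hb.1.2).trans_lt (by linarith [hst.2]))
  obtain ⟨m, hm, hmax⟩ := (hfin_lift.subset (sep_subset _ fun u ↦ realExt L.rel (angle s) (angle u))
    ).exists_maximal ⟨s, ⟨left_mem_Icc.2 hst.1, hx⟩, Relation.EqvGen.refl _⟩
  rcases hm.1.1.2.eq_or_lt with rfl | hmt
  · exact hm.2
  obtain ⟨n, hn, hmin⟩ := (hfin_lift.subset (sep_subset _ fun u ↦ m < u)).exists_minimal
    ⟨t, ⟨right_mem_Icc.2 hst.1, hy⟩, hmt⟩
  have hmn : realExt L.rel (angle m) (angle n) :=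
    L.realExt_of_gap hd hw hn.2.le (subset_closure hm.1.2) (subset_closure hn.1.2)
      fun u hu huw ↦ hu.2.not_ge
        (hmin ⟨⟨⟨hm.1.1.1.trans hu.1.le, hu.2.le.trans hn.1.1.2⟩, huw⟩, hu.1⟩ hu.2.le)
  exact absurd (hmax ⟨hn.1, hm.2.trans _ _ _ hmn⟩ hn.2.le) hn.2.not_ge

end InvRatLam

/-! ### Finiteness of the set of Fatou critical elements -/

lemma exists_angle_eq_angle_add_div {d : ℕ} (hd : 0 < d) {x y : Circle1} (hne : x ≠ y)
    (h : md d x = md d y) :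
    ∃ s ∈ Ico (0 : ℝ) 1, ∃ j : ℕ, 0 < j ∧ j < d ∧ angle s = x ∧ angle (s + j / d) = y := by
  have hd0 : (0 : ℝ) < d := by exact_mod_cast hd
  obtain ⟨s, hs, rfl⟩ := exists_mem_Ico_angle_eq x 0
  obtain ⟨t, ht, rfl⟩ := exists_mem_Ioo_angle_eq hne.symm
  rw [md_angle, md_angle] at h
  obtain ⟨n, hn⟩ := angle_eq_angle_iff.1 h
  have hn0 : 0 < n := by
    have : (0 : ℝ) < n := by nlinarith [ht.1]
    exact_mod_cast this
  lift n to ℕ using hn0.le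
  have hnd : n < d := by
    have : (n : ℝ) < d := by push_cast at hn; nlinarith [ht.2]
    exact_mod_cast this
  refine ⟨s, by simpa using hs, n, by exact_mod_cast hn0, hnd, rfl, congrArg angle ?_⟩
  push_cast at hn
  field_simp
  linarith

lemma IsUnlClass.eq_of_overlapping_translates {L : RatLam} {v v' : Set Circle1}
    (hv : IsUnlClass L.rel v) (hv' : IsUnlClass L.rel v') {s s' θ : ℝ} (hs : angle s ∈ v)
    (hsθ : angle (s + θ) ∈ v) (hs' : angle s' ∈ v') (hs'θ : angle (s' + θ) ∈ v') (hss' : s ≤ s')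
    (hlt : s' - s < θ) (hlt' : s' - s + θ < 1) : v = v' := by
  refine hv.eq_of_unlRel hv' hs hs' ?_
  rcases hss'.eq_or_lt with rfl | hss'
  · exact .refl (hv.notMem_ratC hs)
  · exact .of_crossing hss' (by linarith) (by linarith) (by linarith)
      ((hv.mem_iff_unlRel hs).1 hsθ) ((hv'.mem_iff_unlRel hs').1 hs'θ)

lemma sub_lt_one_div_of_natFloor_mul_eq {c s s' : ℝ} (hc : 0 < c) (hs : 0 ≤ s)
    (h : ⌊s * c⌋₊ = ⌊s' * c⌋₊) : s' - s < 1 / c := by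
  have hle := Nat.floor_le (mul_nonneg hs hc.le)
  have hlt := Nat.lt_floor_add_one (s' * c)
  rw [← h] at hlt
  rw [lt_div_iff₀ hc]
  linarith

/-- A critical element contains a pair `s, s + j/d`; pairs with the same `j` and the same
`⌊s * d⌋₊` cross. -/
lemma RatLam.finite_setOf_fatouCritElem {d : ℕ} (hd : 0 < d) (L : RatLam) :
    {v | FatouCritElem d L.rel v}.Finite := by
  have hd0 : (0 : ℝ) < d := by exact_mod_cast hd
  have hpair (v : {v | FatouCritElem d L.rel v}) : ∃ s ∈ Ico (0 : ℝ) 1, ∃ j : ℕ,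
      0 < j ∧ j < d ∧ angle s ∈ v.1 ∧ angle (s + j / d) ∈ v.1 := by
    have hv := v.2.2.2
    simp only [InjOn, not_forall] at hv
    obtain ⟨x, hx, y, hy, hxy, hne⟩ := hv
    obtain ⟨s, hs, j, hj0, hjd, rfl, rfl⟩ := exists_angle_eq_angle_add_div hd hne hxy
    exact ⟨s, hs, j, hj0, hjd, hx, hy⟩
  choose s hs j hj0 hjd hsv hsjv using hpair
  have hfloor (v) : ⌊s v * d⌋₊ < d := by
    rw [Nat.floor_lt (mul_nonneg (hs v).1 hd0.le)]
    exact mul_lt_of_lt_one_left hd0 (hs v).2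
  have heq (v v') (hf : ⌊s v * d⌋₊ = ⌊s v' * d⌋₊) (hj : j v = j v') (hle : s v ≤ s v') :
      v = v' := by
    have hlt := sub_lt_one_div_of_natFloor_mul_eq hd0 (hs v).1 hf
    have hj_ge : 1 / (d : ℝ) ≤ j v / d := by gcongr; exact_mod_cast hj0 v
    have hj_le : 1 / (d : ℝ) + j v / d ≤ 1 := by
      rw [← add_div, div_le_one hd0, add_comm]
      exact_mod_cast hjd v
    exact Subtype.ext (v.2.1.eq_of_overlapping_translates v'.2.1 (hsv v) (hsjv v) (hsv v')
      (hj ▸ hsjv v') hle (by linarith) (by linarith))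
  refine finite_coe_iff.1 (Finite.of_injective (β := Fin d × Fin d)
    (fun v ↦ (⟨⌊s v * d⌋₊, hfloor v⟩, ⟨j v, hjd v⟩)) fun v v' h ↦ ?_)
  simp only [Prod.mk.injEq, Fin.mk.injEq] at h
  rcases le_total (s v) (s v') with hle | hle
  · exact heq v v' h.1 h.2 hle
  · exact (heq v' v h.1.symm h.2.symm hle).symm

/-! ### Collapsing the gaps of an unlinked class -/

lemma Unlinked.mono {A A' B : Set Circle1} (h : Unlinked A' B) (hA : A ⊆ A') : Unlinked A B := by
  obtain ⟨x, hx, hB⟩ := h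
  have hA' := compl_subset_compl.2 hA
  exact ⟨x, hA' hx, hB.trans (connectedComponentIn_mono x hA')⟩

lemma UnlRel.mono {r r' : Circle1 → Circle1 → Prop} (hr : ∀ x y, r x y → r' x y) {x y : Circle1}
    (h : UnlRel r' x y) : UnlRel r x y :=
  ⟨h.1, h.2.1, h.2.2.imp id fun hcomp z hz ↦
    connectedComponentIn_mono _ (compl_subset_compl.2 fun _ ↦ hr _ _) (hcomp z hz)⟩

namespace IsUnlClass

variable {L : RatLam} {w w' : Set Circle1}

lemma unlinked_relClass (hw : IsUnlClass L.rel w) {z : Circle1} (hz : z ∈ ratC) :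
    Unlinked (relClass L.rel z) w := by
  obtain ⟨x, hx⟩ := hw.nonempty
  exact ⟨x, L.notMem_relClass (hw.notMem_ratC hx), fun y hy ↦
    ((hw.mem_iff_unlRel hx).1 hy).mem_connectedComponentIn hz⟩

lemma unlinked_of_subset_closure (hw : IsUnlClass L.rel w) (hw' : IsUnlClass L.rel w')
    (hne : w ≠ w') {A : Set Circle1} (hA : A ⊆ closure w') (hdisj : Disjoint A w) :
    Unlinked A w := by
  obtain ⟨x, hx⟩ := hw.nonempty
  refine ⟨x, hdisj.notMem_of_mem_right hx, fun y hy ↦ ?_⟩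
  by_contra hsep
  obtain ⟨u, -, rfl⟩ := exists_mem_Ico_angle_eq x 0
  obtain ⟨u', hu', rfl⟩ := exists_mem_Ico_angle_eq y u
  obtain ⟨⟨b, hb, hbA⟩, b', hb', hbA'⟩ := exists_mem_both_Ioo_of_notMem_connectedComponentIn hu'.1
    hu'.2.le (hdisj.notMem_of_mem_right hx) (hdisj.notMem_of_mem_right hy) hsep
  obtain ⟨p, hp, hpw'⟩ := exists_angle_mem_of_mem_closure (hA hbA) (Ioo_mem_nhds hb.1 hb.2)
  obtain ⟨q, hq, hqw'⟩ := exists_angle_mem_of_mem_closure (hA hbA') (Ioo_mem_nhds hb'.1 hb'.2)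
  exact hne (hw.eq_of_unlRel hw' hx hpw' (.of_crossing hp.1 hp.2 hq.1 hq.2
    ((hw.mem_iff_unlRel hx).1 hy) ((hw'.mem_iff_unlRel hpw').1 hqw')))

end IsUnlClass

/-- `a` is the value of `f` at an end of the gap of `w` containing `τ`, or at `τ` itself when
`τ ∈ closure w`. If `f` takes equal values at the two ends of every gap, this is the graph of the
extension of `f` from `closure w` to the circle that is constant on gaps. -/
def GapValue (w : Set Circle1) (f : Circle1 → Circle1) (τ a : Circle1) : Prop :=
  ∃ s t, angle t = τ ∧ angle s ∈ closure w ∧ f (angle s) = a ∧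
    ∀ u ∈ uIcc s t, u ≠ s → angle u ∉ w

section

variable {w : Set Circle1} {f : Circle1 → Circle1}

lemma gapValue_of_mem_closure {x : Circle1} (hx : x ∈ closure w) : GapValue w f x (f x) := by
  obtain ⟨t, -, rfl⟩ := exists_mem_Ico_angle_eq x 0
  refine ⟨t, t, rfl, hx, rfl, fun u hu hne ↦ absurd ?_ hne⟩
  simpa using hu

lemma exists_mem_closure_forall_notMem {x : ℝ} (hx : angle x ∈ closure w) (t : ℝ) :
    ∃ s ∈ uIcc x t, angle s ∈ closure w ∧ ∀ u ∈ uIcc s t, u ≠ s → angle u ∉ w := by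
  have hK : IsCompact (uIcc x t ∩ angle ⁻¹' closure w) :=
    isCompact_uIcc.inter_right (isClosed_closure.preimage continuous_angle)
  obtain ⟨s, ⟨hsx, hsw⟩, hmin⟩ := hK.exists_isMinOn ⟨x, left_mem_uIcc, hx⟩
    (f := fun u ↦ |u - t|) (by fun_prop)
  refine ⟨s, hsx, hsw, fun u hu hne huw ↦ hne ?_⟩
  have hle : |s - t| ≤ |u - t| :=
    hmin ⟨uIcc_subset_uIcc hsx right_mem_uIcc hu, subset_closure huw⟩
  rcases mem_uIcc.1 hu with ⟨hsu, hut⟩ | ⟨htu, hus⟩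
  · rw [abs_of_nonpos (by linarith), abs_of_nonpos (by linarith)] at hle
    linarith
  · rw [abs_of_nonneg (by linarith), abs_of_nonneg (by linarith)] at hle
    linarith

lemma exists_gapValue (hw : w.Nonempty) (f : Circle1 → Circle1) (τ : Circle1) :
    ∃ a, GapValue w f τ a := by
  obtain ⟨x, hx⟩ := hw
  obtain ⟨x, -, rfl⟩ := exists_mem_Ico_angle_eq x 0
  obtain ⟨t, -, rfl⟩ := exists_mem_Ico_angle_eq τ 0
  obtain ⟨s, -, hs, hfree⟩ := exists_mem_closure_forall_notMem (subset_closure hx) t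
  exact ⟨_, s, t, rfl, hs, rfl, hfree⟩

lemma eventually_exists_gapValue {x : ℝ} (hx : angle x ∈ closure w)
    (hf : ContinuousWithinAt f (closure w) (angle x)) {U : Set Circle1}
    (hU : U ∈ 𝓝 (f (angle x))) : ∀ᶠ t in 𝓝 x, ∃ a ∈ U, GapValue w f (angle t) a := by
  obtain ⟨O, hO, hOU⟩ := mem_nhdsWithin_iff_exists_mem_nhds_inter.1 (hf.tendsto hU)
  obtain ⟨ε, hε, hball⟩ := Metric.mem_nhds_iff.1 (continuous_angle.continuousAt hO)
  filter_upwards [Metric.ball_mem_nhds x hε] with t ht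
  obtain ⟨s, hst, hs, hfree⟩ := exists_mem_closure_forall_notMem hx t
  refine ⟨_, hOU ⟨hball ?_, hs⟩, s, t, rfl, hs, rfl, hfree⟩
  exact (convex_ball x ε).ordConnected.uIcc_subset (Metric.mem_ball_self hε) ht hst

lemma exists_common_gapValue_of_uIcc (hw : w.Nonempty) {t t' : ℝ}
    (hfree : ∀ u ∈ uIcc t t', angle u ∉ w) :
    ∃ a, GapValue w f (angle t) a ∧ GapValue w f (angle t') a := by
  obtain ⟨x, hx⟩ := hw
  obtain ⟨x, -, rfl⟩ := exists_mem_Ico_angle_eq x 0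
  obtain ⟨s, -, hs, hs_free⟩ := exists_mem_closure_forall_notMem (subset_closure hx) t
  refine ⟨f (angle s), ⟨s, t, rfl, hs, rfl, hs_free⟩, s, t', rfl, hs, rfl, fun u hu hne ↦ ?_⟩
  rcases uIcc_subset_uIcc_union_uIcc (b := t) hu with hu | hu
  · exact hs_free u hu hne
  · exact hfree u hu

lemma exists_common_gapValue_of_unlinked (hw : w.Nonempty) {x y : Circle1}
    (h : Unlinked {x, y} w) : ∃ a, GapValue w f x a ∧ GapValue w f y a := by
  obtain ⟨z, -, hwz⟩ := h
  obtain ⟨l, hl⟩ := hw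
  obtain ⟨l, -, rfl⟩ := exists_mem_Ico_angle_eq l 0
  have hxyw {u : Circle1} (hu : u ∈ w) : u ≠ x ∧ u ≠ y := by
    simpa using connectedComponentIn_subset _ _ (hwz hu)
  obtain ⟨t, ht, rfl⟩ := exists_mem_Ioo_angle_eq (hxyw hl).1.symm
  obtain ⟨t', ht', rfl⟩ := exists_mem_Ioo_angle_eq (hxyw hl).2.symm
  refine exists_common_gapValue_of_uIcc ⟨_, hl⟩ fun u hu huw ↦ ?_
  have hcomp : angle (l + 1) ∈ connectedComponentIn {angle t, angle t'}ᶜ (angle u) := by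
    rw [angle_add_one]
    exact mem_connectedComponentIn_trans (mem_connectedComponentIn_symm (hwz huw)) (hwz hl)
  have hut : u ≠ t := by rintro rfl; exact (hxyw huw).1 rfl
  have hut' : u ≠ t' := by rintro rfl; exact (hxyw huw).2 rfl
  rcases mem_uIcc.1 hu with ⟨htu, hut'_le⟩ | ⟨ht'u, hut_le⟩
  · exact angle_notMem_connectedComponentIn (htu.lt_of_ne' hut) (hut'_le.lt_of_ne hut') ht'.2
      (by linarith [ht.1]) (by simp) (by simp) hcomp
  · exact angle_notMem_connectedComponentIn (ht'u.lt_of_ne' hut') (hut_le.lt_of_ne hut) ht.2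
      (by linarith [ht'.1]) (by simp) (by simp) hcomp

lemma gapValue_angle_iff {t : ℝ} {a : Circle1} : GapValue w f (angle t) a ↔
    ∃ s, angle s ∈ closure w ∧ f (angle s) = a ∧ ∀ u ∈ uIcc s t, u ≠ s → angle u ∉ w := by
  refine ⟨fun ⟨s, t', ht', hs, hfs, hfree⟩ ↦ ?_, fun ⟨s, h⟩ ↦ ⟨s, t, rfl, h⟩⟩
  obtain ⟨n, rfl⟩ := angle_eq_angle_iff.1 ht'
  refine ⟨s + n, by rwa [angle_add_intCast], by rwa [angle_add_intCast], fun u hu hne ↦ ?_⟩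
  rw [← sub_add_cancel u n, angle_add_intCast]
  refine hfree _ ?_ (by rwa [ne_eq, sub_eq_iff_eq_add])
  rw [mem_uIcc] at hu ⊢
  rcases hu with hu | hu
  · exact .inl ⟨by linarith, by linarith⟩
  · exact .inr ⟨by linarith, by linarith⟩

lemma GapValue.eq {d : ℕ} (hd : 2 ≤ d) {L : InvRatLam d} (hw : IsUnlClass L.rel w)
    (hf : ∀ x ∈ closure w, ∀ y ∈ closure w, f x = f y ↔ realExt L.rel x y) {τ a b : Circle1}
    (ha : GapValue w f τ a) (hb : GapValue w f τ b) : a = b := by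
  obtain ⟨t, -, rfl⟩ := exists_mem_Ico_angle_eq τ 0
  obtain ⟨s, hs, rfl, hs_free⟩ := gapValue_angle_iff.1 ha
  obtain ⟨r, hr, rfl, hr_free⟩ := gapValue_angle_iff.1 hb
  wlog hsr : s ≤ r generalizing s r
  · exact (this r hr hr_free hb s hs hs_free ha (le_of_not_ge hsr)).symm
  rw [hf _ hs _ hr]
  refine L.realExt_of_gap hd hw hsr hs hr fun u hu ↦ ?_
  rcases le_total u t with hut | htu
  · exact hs_free u (mem_uIcc.2 (.inl ⟨hu.1.le, hut⟩)) hu.1.ne'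
  · exact hr_free u (mem_uIcc.2 (.inr ⟨htu, hu.2.le⟩)) hu.2.ne

end

/-! ### The tuning collapses onto the inserted laminations -/

namespace TuningData

variable {d : ℕ} {lam0 : InvRatLam d} (T : TuningData d lam0) {v w : Set Circle1} {n : ℕ}
  {x y : Circle1}

/-- `x` and `y` are related by the pull-back `λ*_w`, where `n` is the first time at which the
infinite unlinked class `w` is mapped into `V`. -/
structure Link (w : Set Circle1) (n : ℕ) (x y : Circle1) : Prop where
  isUnlClass : IsUnlClass lam0.rel w
  infinite : w.Infinite
  image_mem_V : (md d)^[n] '' w ∈ T.V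
  image_notMem_V : ∀ j < n, (md d)^[j] '' w ∉ T.V
  left_mem_closure : x ∈ closure w
  right_mem_closure : y ∈ closure w
  left_mem_ratC : x ∈ ratC
  right_mem_ratC : y ∈ ratC
  rel : (T.lamv ((md d)^[n] '' w)).rel (T.α ((md d)^[n] '' w) ((md d)^[n] x))
    (T.α ((md d)^[n] '' w) ((md d)^[n] y))

lemma tuningBase_iff : tuningBase d lam0 T.V T.α T.lamv x y ↔
    lam0.rel x y ∨ ∃ w n, T.Link w n x y :=
  or_congr Iff.rfl (exists₂_congr fun _ _ ↦
    ⟨fun ⟨h₁, h₂, h₃, h₄, h₅, h₆, h₇, h₈, h₉⟩ ↦ ⟨h₁, h₂, h₃, h₄, h₅, h₆, h₇, h₈, h₉⟩,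
      fun ⟨h₁, h₂, h₃, h₄, h₅, h₆, h₇, h₈, h₉⟩ ↦ ⟨h₁, h₂, h₃, h₄, h₅, h₆, h₇, h₈, h₉⟩⟩)

variable {T}

lemma isUnlClass_of_mem_V (hv : v ∈ T.V) : IsUnlClass lam0.rel v := ((T.hV v).1 hv).1

lemma Link.rel_of_mem_V (h : T.Link v n x y) (hv : v ∈ T.V) :
    (T.lamv v).rel (T.α v x) (T.α v y) := by
  obtain rfl : n = 0 := by
    by_contra hn
    exact h.image_notMem_V 0 (Nat.pos_of_ne_zero hn) (by simpa using hv)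
  simpa using h.rel

lemma Link.exists_common_gapValue (h : T.Link w n x y) (hv : v ∈ T.V) (hne : v ≠ w)
    (f : Circle1 → Circle1) : ∃ a, GapValue v f x a ∧ GapValue v f y a := by
  have hvc := isUnlClass_of_mem_V hv
  refine exists_common_gapValue_of_unlinked hvc.nonempty
    (hvc.unlinked_of_subset_closure h.isUnlClass hne ?_ ?_)
  · exact pair_subset h.left_mem_closure h.right_mem_closure
  · rw [disjoint_insert_left, disjoint_singleton_left]
    exact ⟨fun hx ↦ hvc.notMem_ratC hx h.left_mem_ratC,
      fun hy ↦ hvc.notMem_ratC hy h.right_mem_ratC⟩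

lemma exists_gapValue_of_tuningBase (hv : v ∈ T.V)
    (h : tuningBase d lam0 T.V T.α T.lamv x y) :
    ∃ a b, GapValue v (T.α v) x a ∧ GapValue v (T.α v) y b ∧ (a = b ∨ (T.lamv v).rel a b) := by
  rcases (T.tuningBase_iff).1 h with hrel | ⟨w, n, hlink⟩
  · have hx := (lam0.rel_rat _ _ hrel).1
    obtain ⟨a, hxa, hya⟩ := exists_common_gapValue_of_unlinked (f := T.α v)
      (isUnlClass_of_mem_V hv).nonempty
      (((isUnlClass_of_mem_V hv).unlinked_relClass hx).mono (pair_subset (lam0.refl x hx) hrel))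
    exact ⟨a, a, hxa, hya, .inl rfl⟩
  · by_cases hvw : v = w
    · subst hvw
      exact ⟨_, _, gapValue_of_mem_closure hlink.left_mem_closure,
        gapValue_of_mem_closure hlink.right_mem_closure, .inr (hlink.rel_of_mem_V hv)⟩
    · obtain ⟨a, hxa, hya⟩ := hlink.exists_common_gapValue hv hvw (T.α v)
      exact ⟨a, a, hxa, hya, .inl rfl⟩

section

variable (hd : 2 ≤ d)
include hd

lemma eq_or_rel_of_gapValue (hv : v ∈ T.V)
    (h : Relation.EqvGen (tuningBase d lam0 T.V T.α T.lamv) x y) {a b : Circle1}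
    (ha : GapValue v (T.α v) x a) (hb : GapValue v (T.α v) y b) :
    a = b ∨ (T.lamv v).rel a b := by
  have hunique {τ a b} : GapValue v (T.α v) τ a → GapValue v (T.α v) τ b → a = b :=
    GapValue.eq hd (isUnlClass_of_mem_V hv) (T.hα_fib v hv)
  induction h generalizing a b with
  | rel x y h =>
    obtain ⟨a', b', ha', hb', hab⟩ := exists_gapValue_of_tuningBase hv h
    rwa [hunique ha ha', hunique hb hb']
  | refl x => exact .inl (hunique ha hb)
  | symm x y _ ih => exact (ih hb ha).imp Eq.symm ((T.lamv v).symm _ _)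
  | trans x y z _ _ ihxy ihyz =>
    obtain ⟨c, hc⟩ := exists_gapValue (isUnlClass_of_mem_V hv).nonempty (T.α v) y
    rcases ihxy ha hc with rfl | hac
    · exact ihyz hc hb
    · rcases ihyz hc hb with rfl | hcb
      · exact .inr hac
      · exact .inr ((T.lamv v).trans _ _ _ hac hcb)

lemma realExt_α_of_closureRel (hv : v ∈ T.V) (hx : x ∈ closure v) (hy : y ∈ closure v)
    (h : closureRel (tuningRel d lam0 T.V T.α T.lamv) x y) :
    realExt (T.lamv v).rel (T.α v x) (T.α v y) := by
  by_cases heq : T.α v x = T.α v y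
  · rw [heq]; exact .refl _
  refine .rel _ _ ?_
  obtain ⟨s, -, rfl⟩ := exists_mem_Ico_angle_eq x 0
  obtain ⟨t, -, rfl⟩ := exists_mem_Ico_angle_eq y 0
  obtain ⟨U, U', hU, hU', hdisj⟩ := t2_separation_nhds heq
  refine mem_closure_iff_nhds.2 fun O hO ↦ ?_
  obtain ⟨O₁, hO₁, O₂, hO₂, hO⟩ := mem_nhds_prod_iff.1 hO
  obtain ⟨p, ⟨a, ha, hpa⟩, q, ⟨b, hb, hqb⟩, -, -, hpq⟩ := exists_rel_of_closureRel h
    (eventually_exists_gapValue hx (T.hα_cont v hv _ hx) (inter_mem hU hO₁))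
    (eventually_exists_gapValue hy (T.hα_cont v hv _ hy) (inter_mem hU' hO₂))
  rcases eq_or_rel_of_gapValue hd hv hpq hpa hqb with rfl | hab
  · exact (disjoint_left.1 hdisj ha.1 hb.1).elim
  · exact ⟨(a, b), hO ⟨ha.2, hb.2⟩, hab⟩

end

/-- `μ` is the combinatorial tuning `T_α(λ₀, (λ_v))`. -/
def IsTuning (T : TuningData d lam0) (μ : InvRatLam d) : Prop :=
  ∀ x y, μ.rel x y ↔ tuningRel d lam0 T.V T.α T.lamv x y

namespace IsTuning

variable {μ : InvRatLam d} (hμ : T.IsTuning μ)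
include hμ

lemma rel_of_rel (h : lam0.rel x y) : μ.rel x y :=
  (hμ x y).2 ⟨(lam0.rel_rat _ _ h).1, (lam0.rel_rat _ _ h).2, .rel _ _ (.inl h)⟩

lemma rel_eq : μ.rel = tuningRel d lam0 T.V T.α T.lamv := by
  funext x y
  exact propext (hμ x y)

variable (hd : 2 ≤ d)
include hd

lemma unlRel_of_realExt (h : realExt μ.rel x y) (hx : x ∉ ratC) : UnlRel lam0.rel x y :=
  (μ.unlRel_of_realExt hd h hx).mono fun _ _ ↦ hμ.rel_of_rel

lemma mem_of_realExt (hw : IsUnlClass lam0.rel w) (h : realExt μ.rel x y) (hx : x ∈ w) : y ∈ w :=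
  (hw.mem_iff_unlRel hx).2 (hμ.unlRel_of_realExt hd h (hw.notMem_ratC hx))

lemma realExt_α_of_realExt (hv : v ∈ T.V) (h : realExt μ.rel x y) (hx : x ∈ v) :
    realExt (T.lamv v).rel (T.α v x) (T.α v y) := by
  have hmem {x y} := hμ.mem_of_realExt hd (isUnlClass_of_mem_V hv) (x := x) (y := y)
  induction h with
  | rel x y h =>
    rw [hμ.rel_eq] at h
    exact realExt_α_of_closureRel hd hv (subset_closure hx)
      (subset_closure (hmem (.rel _ _ (hμ.rel_eq ▸ h)) hx)) h
  | refl x => exact .refl _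
  | symm x y h ih => exact (ih (hmem h.symm hx)).symm
  | trans x y z hxy _ ihxy ihyz => exact (ihxy hx).trans _ _ _ (ihyz (hmem hxy hx))

end IsTuning

end TuningData

/-! ### Post-critical finiteness -/

lemma norm_angle_le_abs (t : ℝ) : ‖angle t‖ ≤ |t| :=
  QuotientAddGroup.norm_mk_le_norm (S := AddSubgroup.zmultiples (1 : ℝ))

lemma norm_nsmul_of_norm_lt {D : ℕ} (hD : 0 < D) {x : Circle1} (h : ‖x‖ < 1 / (2 * D)) :
    ‖D • x‖ = D * ‖x‖ := by
  have hD0 : (0 : ℝ) < D := by exact_mod_cast hD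
  obtain ⟨t, ht, rfl⟩ := exists_mem_Ico_angle_eq x (-1 / 2)
  have hnorm : ‖angle t‖ = |t| := by
    rw [AddCircle.norm_coe_eq_abs_iff (p := 1) one_ne_zero, abs_one, abs_le]
    exact ⟨by linarith [ht.1], by linarith [ht.2]⟩
  have hDt : (D : ℝ) * |t| = |D * t| := by rw [abs_mul, abs_of_pos hD0]
  rw [hnorm, lt_div_iff₀ (by positivity)] at h
  rw [hnorm, hDt, show D • angle t = angle (D * t) from md_angle D t,
    AddCircle.norm_coe_eq_abs_iff (p := 1) one_ne_zero, ← hDt, abs_one]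
  linarith

lemma frequently_le_norm_pow_nsmul {D : ℕ} (hD : 2 ≤ D) {x : Circle1}
    (hx : ∀ n : ℕ, D ^ n • x ≠ 0) : ∃ᶠ n : ℕ in atTop, 1 / (2 * D : ℝ) ≤ ‖D ^ n • x‖ := by
  intro hlt
  obtain ⟨N, hN⟩ := eventually_atTop.1 hlt
  simp only [not_le] at hN
  have hgrowth (k : ℕ) : ‖D ^ (N + k) • x‖ = D ^ k * ‖D ^ N • x‖ := by
    induction k with
    | zero => simp
    | succ k ih =>
      rw [← add_assoc, pow_succ', mul_smul, norm_nsmul_of_norm_lt (by omega) (hN _ (by omega)), ih,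
        pow_succ', mul_assoc]
  have hpos : 0 < ‖D ^ N • x‖ := norm_pos_iff.2 (hx N)
  obtain ⟨k, hk⟩ := pow_unbounded_of_one_lt (1 / ‖D ^ N • x‖)
    (show (1 : ℝ) < D by exact_mod_cast hD)
  rw [div_lt_iff₀ hpos, ← hgrowth] at hk
  have hlt_k := hN (N + k) (by omega)
  have hle : 1 / (2 * D : ℝ) ≤ 1 := by
    have : (2 : ℝ) ≤ D := by exact_mod_cast hD
    rw [div_le_one (by positivity)]
    linarith
  linarith

lemma exists_lt_lt_sub_lt_of_infinite {S : Set ℝ} {a b : ℝ} (hS : S.Infinite) (hSab : S ⊆ Icc a b)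
    {ε : ℝ} (hε : 0 < ε) : ∃ x ∈ S, ∃ y ∈ S, ∃ z ∈ S, x < y ∧ y < z ∧ z - x < ε := by
  obtain ⟨k, -, hk⟩ := exists_infinite_inter_preimage_singleton hS (finite_Icc ⌊a / ε⌋ ⌊b / ε⌋)
    (f := fun x ↦ ⌊x / ε⌋) fun x hx ↦ ⟨Int.floor_le_floor (by gcongr; exact (hSab hx).1),
      Int.floor_le_floor (by gcongr; exact (hSab hx).2)⟩
  obtain ⟨x, ⟨hx, hxk⟩, y, hy, z, ⟨hz, hzk⟩, hxy, hyz⟩ := exists_lt_lt_of_infinite hk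
  refine ⟨x, hx, y, hy.1, z, hz, hxy, hyz, ?_⟩
  have habs := Int.abs_sub_lt_one_of_floor_eq_floor (hzk.trans hxk.symm)
  rw [← sub_div, abs_div, abs_of_pos hε, div_lt_one hε] at habs
  exact (le_abs_self _).trans_lt habs

lemma IsUnlClass.norm_sub_lt_of_closureRel {L : RatLam} {v : Set Circle1}
    (hv : IsUnlClass L.rel v) {a b e : ℝ} (hab : a < b) (hbe : b < e) (ha : angle a ∈ v)
    (he : angle e ∈ v) {c : Circle1} (hbc : closureRel L.rel (angle b) c) :
    ‖c - angle b‖ < e - a := by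
  by_contra! hle
  obtain ⟨f, hf, rfl⟩ := exists_mem_Ico_angle_eq c b
  have hright : ‖angle f - angle b‖ ≤ |f - b| := norm_angle_le_abs (f - b)
  have hleft : ‖angle f - angle b‖ ≤ |f - (b + 1)| := by
    rw [← angle_add_one b]
    exact norm_angle_le_abs (f - (b + 1))
  rw [abs_of_nonneg (by linarith [hf.1])] at hright
  rw [abs_of_nonpos (by linarith [hf.2])] at hleft
  refine L.not_unlRel_of_closureRel_between hbe (by linarith) (by linarith : f < a + 1)
    (by linarith) hbc ?_
  rw [angle_add_one]
  exact (hv.mem_iff_unlRel he).1 ha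

lemma eq_of_eqvGen_of_forall_rel_eq {X : Type*} {r : X → X → Prop} (hr : ∀ x y, r x y → r y x)
    {a b : X} (ha : ∀ c, r a c → c = a) (h : Relation.EqvGen r a b) : b = a := by
  suffices ∀ x y, Relation.EqvGen r x y → (x = a ↔ y = a) from (this a b h).1 rfl
  intro x y hxy
  induction hxy with
  | rel x y hxy => exact ⟨by rintro rfl; exact ha y hxy, by rintro rfl; exact ha x (hr _ _ hxy)⟩
  | refl x => exact Iff.rfl
  | symm x y _ ih => exact ih.symm
  | trans x y z _ _ ihxy ihyz => exact ihxy.trans ihyz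

namespace PCFLam

variable {d : ℕ} {x y : Circle1}

lemma eq_of_md_eq {r : Circle1 → Circle1 → Prop} (hr : PCFLam d r) (h : realExt r x y)
    (hx : x ∉ ratC) (hxy : md d x = md d y) : x = y := by
  by_contra hne
  exact hx (hr {z | realExt r x z} ⟨x, rfl⟩ (fun hinj ↦ hne (hinj (.refl _) h hxy)) (.refl _))

variable {L : InvRatLam d} (hd : 2 ≤ d) (hL : PCFLam d L.rel)
include hd hL

lemma eq_of_iterate_md_eq (n : ℕ) (h : realExt L.rel x y) (hx : x ∉ ratC)
    (hxy : (md d)^[n] x = (md d)^[n] y) : x = y := by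
  induction n generalizing x y with
  | zero => exact hxy
  | succ n ih =>
    exact hL.eq_of_md_eq h hx (ih (L.realExt_iterate_md 1 h) ((md_mem_ratC_iff hd).not.2 hx) hxy)

variable {v : Set Circle1} (hv : IsUnlClass L.rel v) {Q : ℕ} (hQ : 0 < Q)
  (hper : MapsTo (md d)^[Q] v v)
include hv hQ hper

/-- Expansion stretches the limit leaf from `z` to a fixed length infinitely often; three of the
corresponding points of the orbit of `z` are so close to each other that the leaf at the middle one
separates the outer two. -/
lemma eq_of_closureRel_of_mapsTo {z c : Circle1} (hz : z ∈ v) (h : closureRel L.rel z c) :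
    c = z := by
  by_contra hne
  have hz_irr := hv.notMem_ratC hz
  have hD : 2 ≤ d ^ Q := hd.trans (Nat.le_self_pow hQ.ne' d)
  have hiter (x : Circle1) (n : ℕ) : (md d)^[Q * n] x = (d ^ Q) ^ n • x := by
    rw [iterate_md, pow_mul]
  have hfreq := frequently_le_norm_pow_nsmul hD (x := c - z) fun n h0 ↦ by
    rw [smul_sub, sub_eq_zero, ← hiter, ← hiter] at h0
    exact hne (hL.eq_of_iterate_md_eq hd (Q * n) (.rel _ _ h) hz_irr h0.symm).symm
  choose τ hτ hτz using fun n ↦ exists_mem_Ico_angle_eq ((md d)^[Q * n] z) 0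
  have hτv (n : ℕ) : angle (τ n) ∈ v := by
    rw [hτz, iterate_mul]
    exact hper.iterate n hz
  have hτ_inj : Injective τ := fun m n hmn ↦ by
    have hz_eq : (md d)^[Q * m] z = (md d)^[Q * n] z := by rw [← hτz, ← hτz, hmn]
    exact Nat.eq_of_mul_eq_mul_left hQ (injective_iterate_md_of_notMem_ratC hd hz_irr hz_eq)
  obtain ⟨_, ⟨k, -, rfl⟩, _, ⟨l, hl, rfl⟩, _, ⟨m, -, rfl⟩, hkl, hlm, hkm⟩ :=
    exists_lt_lt_sub_lt_of_infinite
      ((Nat.frequently_atTop_iff_infinite.1 hfreq).image hτ_inj.injOn) (a := 0) (b := 0 + 1)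
      (by rintro _ ⟨n, -, rfl⟩; exact Ico_subset_Icc_self (hτ n))
      (show (0 : ℝ) < 1 / (2 * (d ^ Q : ℕ)) by positivity)
  have hleaf : closureRel L.rel (angle (τ l)) ((md d)^[Q * l] c) := by
    rw [hτz]
    exact L.closureRel_iterate_md _ h
  have hlt := hv.norm_sub_lt_of_closureRel hkl hlm (hτv k) (hτv m) hleaf
  rw [hτz, hiter, hiter, ← smul_sub] at hlt
  exact (hlt.trans hkm).not_ge hl

lemma eq_of_realExt_of_mapsTo (hx : x ∈ v) (h : realExt L.rel x y) : y = x :=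
  eq_of_eqvGen_of_forall_rel_eq (fun _ _ ↦ L.closureRel_symm)
    (fun _ ↦ hL.eq_of_closureRel_of_mapsTo hd hv hQ hper hx) h

end PCFLam

namespace TuningData

variable {d : ℕ} {lam0 : InvRatLam d} (T : TuningData d lam0) {v w : Set Circle1} {x y : Circle1}

/-- The time of the `k`-th visit of the orbit of `w` to `V`, for `w ∈ V`. -/
def visitTime (w : Set Circle1) : ℕ → ℕ
  | 0 => 0
  | k + 1 => T.ret ((md d)^[visitTime w k] '' w) + visitTime w k

lemma iterate_visitTime_succ (w : Set Circle1) (k : ℕ) : (md d)^[T.visitTime w (k + 1)] =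
    (md d)^[T.ret ((md d)^[T.visitTime w k] '' w)] ∘ (md d)^[T.visitTime w k] :=
  iterate_add _ _ _

variable {T}

lemma image_visitTime_mem_V (hw : w ∈ T.V) (k : ℕ) : (md d)^[T.visitTime w k] '' w ∈ T.V := by
  induction k with
  | zero => simpa [visitTime] using hw
  | succ k ih =>
    rw [iterate_visitTime_succ, image_comp]
    exact (T.hret _ ih).2.1

lemma strictMono_visitTime (hw : w ∈ T.V) : StrictMono (T.visitTime w) :=
  strictMono_nat_of_lt_succ fun k ↦
    Nat.lt_add_of_pos_left (T.hret _ (image_visitTime_mem_V hw k)).1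

lemma α_visitTime_mem_multiples (hw : w ∈ T.V) (hx : x ∈ w) (k : ℕ) :
    T.α ((md d)^[T.visitTime w k] '' w) ((md d)^[T.visitTime w k] x) ∈
      AddSubmonoid.multiples (T.α w x) := by
  induction k with
  | zero => simp [visitTime]
  | succ k ih =>
    rw [iterate_visitTime_succ, image_comp, comp_apply, T.hα_equiv _ (image_visitTime_mem_V hw k) _
      (subset_closure (mem_image_of_mem _ hx))]
    exact AddSubmonoid.nsmul_mem _ ih _

lemma md_δf_α_eq_of_realExt_md (hv : v ∈ T.V) (hx : x ∈ closure v) (hy : y ∈ closure v)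
    (h : realExt lam0.rel (md d x) (md d y)) : md (T.δf v) (T.α v x) = md (T.δf v) (T.α v y) := by
  rw [← T.hα_equiv v hv x hx, ← T.hα_equiv v hv y hy]
  refine (T.hα_fib _ (T.hret v hv).2.1 _ (iterate_md_mem_closure_image d _ hx) _
    (iterate_md_mem_closure_image d _ hy)).2 ?_
  obtain ⟨n, hn⟩ := Nat.exists_eq_succ_of_ne_zero (T.hret v hv).1.ne'
  rw [hn]
  exact lam0.realExt_iterate_md n h

section

variable (hd : 2 ≤ d)
include hd

variable (T) in
lemma finite_V : T.V.Finite := by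
  rw [show T.V = {v | FatouCritElem d lam0.rel v} from Set.ext T.hV]
  exact lam0.finite_setOf_fatouCritElem (by omega)

lemma α_notMem_ratC (hlam0 : PCFLam d lam0.rel) (hw : w ∈ T.V) (hx : x ∈ w) : T.α w x ∉ ratC := by
  intro hα
  have hfin := (mem_ratC_iff_isOfFinAddOrder.1 hα).finite_multiples
  obtain ⟨k, -, l, -, hkl, heq⟩ := infinite_univ.exists_ne_map_eq_of_mapsTo
    (f := fun k ↦ ((md d)^[T.visitTime w k] '' w,
      T.α ((md d)^[T.visitTime w k] '' w) ((md d)^[T.visitTime w k] x)))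
    (t := T.V ×ˢ AddSubmonoid.multiples (T.α w x))
    (fun k _ ↦ ⟨image_visitTime_mem_V hw k, α_visitTime_mem_multiples hw hx k⟩)
    ((T.finite_V hd).prod hfin)
  wlog hlt : k < l generalizing k l
  · exact this l k hkl.symm heq.symm (by omega)
  simp only [Prod.mk.injEq] at heq
  obtain ⟨hvisit, hα_eq⟩ := heq
  rw [← hvisit] at hα_eq
  have hv := image_visitTime_mem_V hw k
  have hmem_k : (md d)^[T.visitTime w k] x ∈ (md d)^[T.visitTime w k] '' w :=
    mem_image_of_mem _ hx
  have hmem_l : (md d)^[T.visitTime w l] x ∈ (md d)^[T.visitTime w k] '' w :=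
    hvisit ▸ mem_image_of_mem _ hx
  have htime := strictMono_visitTime hw hlt
  have hper : MapsTo (md d)^[T.visitTime w l - T.visitTime w k]
      ((md d)^[T.visitTime w k] '' w) ((md d)^[T.visitTime w k] '' w) := by
    refine mapsTo_iff_image_subset.2 (Eq.subset ?_)
    rw [← image_comp, ← iterate_add, Nat.sub_add_cancel htime.le, hvisit]
  have hx_eq := hlam0.eq_of_realExt_of_mapsTo hd (isUnlClass_of_mem_V hv) (Nat.sub_pos_of_lt htime)
    hper hmem_k
    ((T.hα_fib _ hv _ (subset_closure hmem_k) _ (subset_closure hmem_l)).1 hα_eq)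
  exact htime.ne' (injective_iterate_md_of_notMem_ratC hd
    ((isUnlClass_of_mem_V hw).notMem_ratC hx) hx_eq)

end

namespace IsTuning

variable {μ : InvRatLam d} (hμ : T.IsTuning μ) (hd : 2 ≤ d) (hlam0 : PCFLam d lam0.rel)
  (hlamv : ∀ v ∈ T.V, PCFLam (T.δf v) (T.lamv v).rel)
include hμ hd hlam0 hlamv

lemma eq_of_md_eq (h : realExt μ.rel x y) (hx : x ∉ ratC) (hxy : md d x = md d y) : x = y := by
  by_contra hne
  set w := {z | UnlRel lam0.rel x z}
  have hw : IsUnlClass lam0.rel w := ⟨x, hx, rfl⟩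
  have hxw : x ∈ w := .refl hx
  have hyw : y ∈ w := hμ.mem_of_realExt hd hw h hxw
  by_cases hfin : w.Finite
  · exact hne (hlam0.eq_of_md_eq (lam0.realExt_of_mem_finite_unlClass hd hw hfin hxw hyw) hx hxy)
  have hwV : w ∈ T.V := (T.hV w).2 ⟨hw, hfin, fun hinj ↦ hne (hinj hxw hyw hxy)⟩
  have hα : T.α w x = T.α w y :=
    (hlamv w hwV).eq_of_md_eq (hμ.realExt_α_of_realExt hd hwV h hxw)
      (α_notMem_ratC hd hlam0 hwV hxw)
      (md_δf_α_eq_of_realExt_md hwV (subset_closure hxw) (subset_closure hyw) (hxy ▸ .refl _))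
  exact hne (hlam0.eq_of_md_eq
    ((T.hα_fib w hwV _ (subset_closure hxw) _ (subset_closure hyw)).1 hα) hx hxy)

theorem pcfLam : PCFLam d μ.rel := by
  rintro _ ⟨x₀, rfl⟩ hinj z hz
  by_contra hz_irr
  simp only [InjOn, not_forall] at hinj
  obtain ⟨x, hx, y, hy, hxy, hne⟩ := hinj
  have hx₀ : x₀ ∉ ratC := (μ.mem_ratC_iff_of_realExt hd hz).not.2 hz_irr
  exact hne (hμ.eq_of_md_eq hd hlam0 hlamv (hx.symm.trans _ _ _ hy)
    ((μ.mem_ratC_iff_of_realExt hd hx).not.1 hx₀) hxy)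

end IsTuning

end TuningData

/-! ### Hyperbolic laminations do not fold unlinked classes -/

namespace HyperbolicLam

variable {d : ℕ} {r : Circle1 → Circle1 → Prop}

lemma pcfLam (hr : HyperbolicLam d r) : PCFLam d r := fun A hA hinj ↦ absurd (hr A hA) hinj

lemma eq_of_md_eq (hr : HyperbolicLam d r) {x y : Circle1} (h : realExt r x y)
    (hxy : md d x = md d y) : x = y :=
  hr {z | realExt r x z} ⟨x, rfl⟩ (.refl _) h hxy

end HyperbolicLam

section

variable {d : ℕ} (hd : 2 ≤ d)
include hd

lemma md_angle_sub_div (b : ℝ) (i : ℕ) : md d (angle ((b - i) / d)) = angle b := by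
  have hd0 : (d : ℝ) ≠ 0 := by positivity
  rw [md_angle, mul_div_cancel₀ _ hd0, ← angle_add_intCast (b - i) i, Int.cast_natCast,
    sub_add_cancel]

lemma sub_div_mem_Ioo {u u' b : ℝ} {i j : ℕ} (hb : b ∈ Ioo (d * u + j) (d * u')) (hij : i ≤ j) :
    (b - i) / d ∈ Ioo u u' := by
  have hd0 : (0 : ℝ) < d := by positivity
  have hij : (i : ℝ) ≤ j := by exact_mod_cast hij
  rw [mem_Ioo, lt_div_iff₀ hd0, div_lt_iff₀ hd0]
  constructor <;> linarith [hb.1, hb.2, i.cast_nonneg (α := ℝ)]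

lemma exists_eq_sub_div_of_md_angle_eq {u u' b t : ℝ} {j : ℕ}
    (hb : b ∈ Ioo (d * u') (d * u + j + 1)) (ht : t ∈ Ioo u u') (htb : md d (angle t) = angle b) :
    ∃ m ∈ Finset.Icc 1 j, t = (b - m : ℝ) / d := by
  have hd0 : (0 : ℝ) < d := by positivity
  rw [md_angle] at htb
  obtain ⟨m, rfl⟩ := angle_eq_angle_iff.1 htb
  have hut := mul_lt_mul_of_pos_left ht.1 hd0
  have htu' := mul_lt_mul_of_pos_left ht.2 hd0
  have hm_pos : 0 < m := by exact_mod_cast (by linarith [hb.1] : (0 : ℝ) < m)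
  have hm_lt : m < j + 1 := by exact_mod_cast (by linarith [hb.2] : (m : ℝ) < j + 1)
  lift m to ℕ using hm_pos.le
  refine ⟨m, Finset.mem_Icc.2 (by omega), ?_⟩
  rw [eq_div_iff hd0.ne']
  push_cast
  ring

lemma InvRatLam.exists_rel_md_eq (L : InvRatLam d) {x y : Circle1} (h : L.rel (md d x) y) :
    ∃ z, L.rel x z ∧ md d z = y := by
  have hx : x ∈ ratC := (md_mem_ratC_iff hd).1 (L.rel_rat _ _ h).1
  have hy : y ∈ md d '' relClass L.rel x := by
    rw [(L.invariant x hx).1]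
    exact h
  exact hy

end

lemma UnlRel.exists_mem_Ioo_of_rel {L : RatLam} {u u' t : ℝ} {y : Circle1}
    (h : UnlRel L.rel (angle u) (angle u')) (ht : t ∈ Ioo u u') (hty : L.rel (angle t) y) :
    ∃ s ∈ Ioo u u', angle s = y := by
  obtain ⟨ht_rat, hy_rat⟩ := L.rel_rat _ _ hty
  obtain ⟨s, hs, rfl⟩ := exists_mem_Ioo_angle_eq (show y ≠ angle u by rintro rfl; exact h.1 hy_rat)
  refine ⟨s, ⟨hs.1, lt_of_not_ge fun hle ↦ ?_⟩, rfl⟩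
  have hlt : u' < s := hle.lt_of_ne (by rintro rfl; exact h.2.1 hy_rat)
  refine angle_notMem_connectedComponentIn ht.2 hlt hs.2 (by linarith [ht.1]) (L.refl _ ht_rat) hty
    ?_
  rw [angle_add_one]
  exact h.symm.mem_connectedComponentIn ht_rat

namespace HyperbolicLam

variable {d : ℕ} {L : InvRatLam d} (hL : HyperbolicLam d L.rel) (hd : 2 ≤ d)
include hL hd

/-- If the class of `z` separated the images, it would contain some `b` with `j + 1` preimages in
`(u, u')` and some `b'` with only `j` of them; but each preimage of `b` is related to one of `b'`
there, and no two preimages of `b` are related. -/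
lemma angle_mul_mem_connectedComponentIn {u u' : ℝ} (huu' : u < u') (hu'u : u' < u + 1)
    (h : UnlRel L.rel (angle u) (angle u')) (z : Circle1) :
    angle (d * u') ∈ connectedComponentIn (relClass L.rel z)ᶜ (angle (d * u)) := by
  have hoff {t : ℝ} (ht : angle t ∉ ratC) : angle (d * t) ∉ relClass L.rel z := by
    rw [← md_angle]
    exact L.notMem_relClass ((md_mem_ratC_iff hd).not.2 ht)
  by_contra hsep
  have hlt : d * u < d * u' := by gcongr
  set j := ⌊d * u' - d * u⌋₊
  have hj_le : (j : ℝ) ≤ d * u' - d * u := Nat.floor_le (by linarith)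
  have hlt_j : d * u' - d * u < j + 1 := Nat.lt_floor_add_one _
  have hshift : angle (d * u + j) = angle (d * u) := by exact_mod_cast angle_add_intCast (d * u) j
  obtain ⟨⟨b, hb, hzb⟩, b', hb', hzb'⟩ := exists_mem_both_Ioo_of_notMem_connectedComponentIn
    (by linarith : d * u + j ≤ d * u') (by linarith) (hshift ▸ hoff h.1) (hoff h.2.1)
    (hshift ▸ hsep)
  have hpartner (i : ℕ) (hi : i ∈ Finset.range (j + 1)) :
      ∃ m ∈ Finset.Icc 1 j, L.rel (angle ((b - i) / d)) (angle ((b' - m) / d)) := by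
    obtain ⟨y, hrel, hy⟩ := L.exists_rel_md_eq hd (x := angle ((b - i) / d)) (y := angle b')
      (by rw [md_angle_sub_div hd]; exact L.trans _ _ _ (L.symm _ _ hzb) hzb')
    obtain ⟨t, ht, rfl⟩ :=
      h.exists_mem_Ioo_of_rel (sub_div_mem_Ioo hd hb (Finset.mem_range_succ_iff.1 hi)) hrel
    obtain ⟨m, hm, rfl⟩ := exists_eq_sub_div_of_md_angle_eq hd hb' ht hy
    exact ⟨m, hm, hrel⟩
  choose! m hm hrel using hpartner
  obtain ⟨i, hi, i', hi', hne, hmm⟩ := Finset.exists_ne_map_eq_of_card_lt_of_maps_to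
    (by simp : (Finset.Icc 1 j).card < (Finset.range (j + 1)).card) (f := m) hm
  have hii' : L.rel (angle ((b - i) / d)) (angle ((b - i') / d)) :=
    L.trans _ _ _ (hrel i hi) (hmm ▸ L.symm _ _ (hrel i' hi'))
  have hmem := sub_div_mem_Ioo hd hb (Finset.mem_range_succ_iff.1 hi)
  have hmem' := sub_div_mem_Ioo hd hb (Finset.mem_range_succ_iff.1 hi')
  have heq := eq_of_angle_eq_of_abs_sub_lt
    (hL.eq_of_md_eq (realExt_of_rel hii') (by simp only [md_angle_sub_div hd]))
    (abs_sub_lt_iff.2 ⟨by linarith [hmem.2, hmem'.1], by linarith [hmem.1, hmem'.2]⟩)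
  rw [div_left_inj' (by positivity), sub_right_inj, Nat.cast_inj] at heq
  exact hne heq

lemma md_mem_connectedComponentIn {x y : Circle1} (h : UnlRel L.rel x y) (z : Circle1) :
    md d y ∈ connectedComponentIn (relClass L.rel z)ᶜ (md d x) := by
  obtain ⟨u, -, rfl⟩ := exists_mem_Ico_angle_eq x 0
  obtain ⟨u', ⟨huu', hu'u⟩, rfl⟩ := exists_mem_Ico_angle_eq y u
  rcases huu'.eq_or_lt with rfl | hlt
  · exact mem_connectedComponentIn (L.notMem_relClass ((md_mem_ratC_iff hd).not.2 h.1))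
  · rw [md_angle, md_angle]
    exact hL.angle_mul_mem_connectedComponentIn hd hlt hu'u h z

lemma image_subset_connectedComponentIn {w : Set Circle1} (hw : IsUnlClass L.rel w) {θ : Circle1}
    (hθ : θ ∈ w) (z : Circle1) :
    md d '' w ⊆ connectedComponentIn (relClass L.rel z)ᶜ (md d θ) := by
  rintro _ ⟨t, ht, rfl⟩
  exact hL.md_mem_connectedComponentIn hd ((hw.mem_iff_unlRel hθ).1 ht) z

lemma md_mem_connectedComponentIn_of_mem_closure {w : Set Circle1} (hw : IsUnlClass L.rel w)
    {θ y z : Circle1} (hθ : θ ∈ w) (hy : y ∈ closure w) (hzy : ¬ L.rel z (md d y)) :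
    md d y ∈ connectedComponentIn (relClass L.rel z)ᶜ (md d θ) := by
  obtain ⟨_, hmem, hcomp⟩ := exists_mem_connectedComponentIn_of_mem_closure (L.finiteClass z)
    (iterate_md_mem_closure_image d 1 hy) hzy
  exact mem_connectedComponentIn_trans (hL.image_subset_connectedComponentIn hd hw hθ z hmem)
    (mem_connectedComponentIn_symm hcomp)

end HyperbolicLam

/-! ### Accumulation from the right -/

/-- `S` accumulates at the angle `p` from the right. A rational class meeting the closure of an
unlinked class contains such an angle, and the one-sided approach tells apart the unlinked classes
that touch a common rational class. -/
def AccumulatesRight (S : Set Circle1) (p : ℝ) : Prop := ∃ᶠ u in 𝓝[>] p, angle u ∈ S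

namespace AccumulatesRight

variable {S : Set Circle1} {p q : ℝ}

lemma exists_mem_Ioo (h : AccumulatesRight S p) (hpq : p < q) : ∃ u ∈ Ioo p q, angle u ∈ S :=
  (h.and_eventually (Ioo_mem_nhdsGT hpq)).exists.imp fun _ hu ↦ hu.symm

lemma map (h : AccumulatesRight S p) {S' : Set Circle1} {f : ℝ → ℝ} (hf : StrictMono f)
    (hcont : Continuous f) (hS : ∀ u, angle u ∈ S → angle (f u) ∈ S') :
    AccumulatesRight S' (f p) := by
  have htendsto : Tendsto f (𝓝[>] p) (𝓝[>] f p) :=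
    hcont.continuousWithinAt.tendsto_nhdsWithin fun _ hu ↦ hf hu
  exact htendsto.frequently (h.mono hS)

lemma of_angle_eq (h : AccumulatesRight S p) (hpq : angle p = angle q) : AccumulatesRight S q := by
  obtain ⟨n, rfl⟩ := angle_eq_angle_iff.1 hpq
  exact h.map (add_left_strictMono (a := (n : ℝ))) (by fun_prop) fun u hu ↦ by
    rwa [angle_add_intCast]

lemma angle_eq_of_isPreconnected (hS : IsPreconnected S) (hp : angle p ∉ S) (hq : angle q ∉ S)
    (h : AccumulatesRight S p) (h' : AccumulatesRight S q) : angle p = angle q := by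
  by_contra hne
  obtain ⟨r, hr, hrq⟩ := exists_mem_Ioo_angle_eq (Ne.symm hne)
  obtain ⟨u, hu, huS⟩ := h.exists_mem_Ioo hr.1
  obtain ⟨v, hv, hvS⟩ := (h'.of_angle_eq hrq.symm).exists_mem_Ioo hr.2
  rcases angle_mem_or_mem_of_isPreconnected hS hu.1 hu.2 hv.1 hv.2 huS hvS with hpS | hrS
  · exact hp hpS
  · exact hq (hrq ▸ hrS)

lemma md_angle_eq_of_image_subset {d : ℕ} (hd : 2 ≤ d) {S' B : Set Circle1} {x : Circle1}
    (h : AccumulatesRight S p) (h' : AccumulatesRight S' q) (hp : md d (angle p) ∈ B)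
    (hq : md d (angle q) ∈ B) (hS : md d '' S ⊆ connectedComponentIn Bᶜ x)
    (hS' : md d '' S' ⊆ connectedComponentIn Bᶜ x) : md d (angle p) = md d (angle q) := by
  have hmono : StrictMono fun u : ℝ ↦ d * u := strictMono_mul_left_of_pos (by positivity)
  have hmem {S : Set Circle1} (hS : md d '' S ⊆ connectedComponentIn Bᶜ x) (u : ℝ)
      (hu : angle u ∈ S) : angle (d * u) ∈ connectedComponentIn Bᶜ x :=
    hS ⟨_, hu, md_angle d u⟩
  rw [md_angle] at hp hq ⊢
  rw [md_angle]
  have hoff {y : Circle1} (hy : y ∈ B) : y ∉ connectedComponentIn Bᶜ x :=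
    fun hmem ↦ connectedComponentIn_subset _ _ hmem hy
  exact angle_eq_of_isPreconnected isPreconnected_connectedComponentIn (hoff hp) (hoff hq)
    (h.map hmono (by fun_prop) (hmem hS)) (h'.map hmono (by fun_prop) (hmem hS'))

end AccumulatesRight

lemma accumulatesRight_of_mem_closure {S : Set Circle1} {s t : ℝ} (hst : s < t)
    (ht : angle t ∈ closure S) (htS : angle t ∉ S) (hfree : ∀ u ∈ Ioo s t, angle u ∉ S) :
    AccumulatesRight S t := by
  rw [AccumulatesRight, frequently_nhdsWithin_iff]
  refine ((angle_mem_closure_iff.1 ht).and_eventually (Ioi_mem_nhds hst)).mono fun u hu ↦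
    ⟨hu.1, mem_Ioi.2 (lt_of_not_ge fun hut ↦ ?_)⟩
  rcases hut.eq_or_lt with rfl | hut
  · exact htS hu.1
  · exact hfree u ⟨hu.2, hut⟩ hu.1

namespace IsUnlClass

variable {w w' : Set Circle1}

lemma eq_of_accumulatesRight {L : RatLam} (hw : IsUnlClass L.rel w) (hw' : IsUnlClass L.rel w')
    {p : ℝ} (h : AccumulatesRight w p) (h' : AccumulatesRight w' p) : w = w' := by
  obtain ⟨θ, hθ⟩ := hw.nonempty
  obtain ⟨θ', hθ'⟩ := hw'.nonempty
  refine hw.eq_of_unlRel hw' hθ hθ' ⟨hw.notMem_ratC hθ, hw'.notMem_ratC hθ', .inr fun z hz ↦ ?_⟩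
  obtain ⟨r, hr, hfree⟩ := mem_nhdsGT_iff_exists_Ioo_subset.1
    (eventually_nhdsGT_angle_notMem (L.finiteClass z) p)
  obtain ⟨u, hu, huw⟩ := h.exists_mem_Ioo hr
  obtain ⟨u', hu', huw'⟩ := h'.exists_mem_Ioo hr
  have huu' : angle u' ∈ connectedComponentIn (relClass L.rel z)ᶜ (angle u) :=
    angle_mem_connectedComponentIn fun t ht ↦ hfree (ordConnected_Ioo.uIcc_subset hu hu' ht)
  exact mem_connectedComponentIn_trans (mem_connectedComponentIn_trans
    (((hw.mem_iff_unlRel hθ).1 huw).mem_connectedComponentIn hz) huu')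
    (((hw'.mem_iff_unlRel huw').1 hθ').mem_connectedComponentIn hz)

lemma exists_rel_of_notMem {L : RatLam} (hw : IsUnlClass L.rel w) {q c u : ℝ}
    (h : AccumulatesRight w q) (hqc : q < c) (hcu : c < u) (huq : u ≤ q + 1) (hu : angle u ∈ w)
    (hc : angle c ∉ ratC) (hcw : angle c ∉ w) :
    ∃ u₀ ∈ Ioo q c, angle u₀ ∈ w ∧ ∃ a ∈ Ioo u₀ c, ∃ b ∈ Ioo c u, L.rel (angle a) (angle b) := by
  obtain ⟨z, hz, hsep⟩ :
      ∃ z ∈ ratC, angle u ∉ connectedComponentIn (relClass L.rel z)ᶜ (angle c) := by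
    by_contra! hcomp
    exact hcw ((hw.mem_iff_unlRel hu).2 (UnlRel.symm ⟨hc, hw.notMem_ratC hu, .inr hcomp⟩))
  obtain ⟨⟨b, hb, hzb⟩, a, ha, hza⟩ := exists_mem_both_Ioo_of_notMem_connectedComponentIn hcu.le
    (by linarith) (L.notMem_relClass hc) (L.notMem_relClass (hw.notMem_ratC hu)) hsep
  obtain ⟨u₀, hu₀, hu₀w⟩ := h.exists_mem_Ioo hqc
  refine ⟨u₀, hu₀, hu₀w, a - 1, ⟨lt_of_not_ge fun hle ↦ ?_, by linarith [ha.2]⟩, b, hb, ?_⟩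
  · have hlt : a < u₀ + 1 := by
      refine (by linarith : a ≤ u₀ + 1).lt_of_ne ?_
      rintro rfl
      rw [angle_add_one] at hza
      exact hw.notMem_ratC hu₀w (L.rel_rat _ _ hza).2
    refine angle_notMem_connectedComponentIn hb.2 ha.1 hlt (by linarith [hu₀.2, hb.1]) hzb hza ?_
    rw [angle_add_one]
    exact ((hw.mem_iff_unlRel hu).1 hu₀w).mem_connectedComponentIn hz
  · rw [← angle_add_one (a - 1), sub_add_cancel]
    exact L.trans _ _ _ (L.symm _ _ hza) hzb

variable {d : ℕ} {L : InvRatLam d}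

/-- If `w` does not accumulate at `y` from the right, then it does so at the other end of the gap of
`w` to the right of `y`. -/
lemma exists_accumulatesRight (hd : 2 ≤ d) (hw : IsUnlClass L.rel w) {y : Circle1} (hy : y ∈ ratC)
    (hyw : y ∈ closure w) : ∃ p, L.rel y (angle p) ∧ AccumulatesRight w p := by
  obtain ⟨s, -, rfl⟩ := exists_mem_Ico_angle_eq y 0
  by_cases hs : AccumulatesRight w s
  · exact ⟨s, L.refl _ hy, hs⟩
  obtain ⟨r, hr, hfree_r⟩ := mem_nhdsGT_iff_exists_Ioo_subset.1 (not_frequently.1 hs)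
  obtain ⟨t, hst, ht⟩ := exists_between (lt_min hr (lt_add_one s))
  obtain ⟨htr, hts⟩ := lt_min_iff.1 ht
  obtain ⟨l, hl, hlw, hfree_l⟩ := exists_mem_closure_forall_notMem
    (by rwa [angle_add_one] : angle (s + 1) ∈ closure w) t
  rw [uIcc_of_ge hts.le] at hl
  rw [uIcc_of_ge hl.1] at hfree_l
  have hsl : s < l := hst.trans_le hl.1
  have hfree (u : ℝ) (hu : u ∈ Ioo s l) : angle u ∉ w := by
    rcases lt_or_ge u r with hur | hru
    · exact hfree_r ⟨hu.1, hur⟩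
    · exact hfree_l u ⟨htr.le.trans hru, hu.2.le⟩ hu.2.ne
  have hls : l < s + 1 := by
    refine hl.2.lt_of_ne ?_
    rintro rfl
    obtain ⟨θ, hθ⟩ := hw.nonempty
    obtain ⟨u, hu, rfl⟩ := exists_mem_Ioo_angle_eq
      (show θ ≠ angle s by rintro rfl; exact hw.notMem_ratC hθ hy)
    exact hfree u hu hθ
  have hrel : L.rel (angle s) (angle l) :=
    L.rel_of_closureRel hd hy (L.closureRel_of_gap hd hw hsl hls hyw hlw hfree)
  exact ⟨l, hrel, accumulatesRight_of_mem_closure hsl hlw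
    (fun hmem ↦ hw.notMem_ratC hmem (L.rel_rat _ _ hrel).2) hfree⟩

end IsUnlClass

namespace HyperbolicLam

variable {d : ℕ} {L : InvRatLam d} (hL : HyperbolicLam d L.rel) (hd : 2 ≤ d)
  {w w' : Set Circle1} {p q : ℝ}
include hL hd

/-- A leaf cutting `angle c` off `w` near `q` is so short that its image still cuts `m_d (angle c)`
off `m_d '' w`. -/
lemma angle_mem_of_md_angle_mem_image (hw : IsUnlClass L.rel w) (h : AccumulatesRight w q)
    {c u : ℝ} (hqc : q < c) (hcu : c < u) (hdu : d * u < d * q + 1) (hu : angle u ∈ w)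
    (hc : md d (angle c) ∈ md d '' w) : angle c ∈ w := by
  by_contra hcw
  obtain ⟨θ, hθ, hθc⟩ := hc
  have hc_rat : angle c ∉ ratC := by
    rw [← md_mem_ratC_iff hd, ← hθc, md_mem_ratC_iff hd]
    exact hw.notMem_ratC hθ
  have hd0 : (0 : ℝ) < d := by positivity
  have hd1 : (1 : ℝ) ≤ d := by exact_mod_cast (by omega : 1 ≤ d)
  obtain ⟨u₀, hu₀, hu₀w, a, ha, b, hb, hab⟩ := hw.exists_rel_of_notMem h hqc hcu
    (by nlinarith) hu hc_rat hcw
  have hmul {s t : ℝ} (hst : s < t) : d * s < d * t := mul_lt_mul_of_pos_left hst hd0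
  have ha_mem : angle (d * a) ∈ relClass L.rel (md d (angle a)) := by
    rw [md_angle]
    exact L.refl _ (md_angle d a ▸ (L.rel_rat _ _ (L.rel_md hab)).1)
  have hb_mem : angle (d * b) ∈ relClass L.rel (md d (angle a)) := md_angle d b ▸ L.rel_md hab
  refine angle_notMem_connectedComponentIn (hmul ha.2) (hmul hb.1)
    (by linarith [hmul hb.2, hmul hu₀.1] : d * b < d * u₀ + 1) (by linarith [hmul ha.1])
    ha_mem hb_mem ?_
  rw [angle_add_one, ← md_angle, ← md_angle, ← hθc]
  exact hL.md_mem_connectedComponentIn hd ((hw.mem_iff_unlRel hθ).1 hu₀w) _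

lemma angle_eq_of_accumulatesRight_of_injOn (hw : IsUnlClass L.rel w) (hinj : InjOn (md d) w)
    (hp : AccumulatesRight w p) (hq : AccumulatesRight w q)
    (hpq : md d (angle p) = md d (angle q)) : angle p = angle q := by
  have hd0 : (0 : ℝ) < d := by positivity
  obtain ⟨u, hu, huw⟩ := hq.exists_mem_Ioo (lt_add_of_pos_right q (one_div_pos.2 hd0))
  obtain ⟨θ, hθ, hθw⟩ := hp.exists_mem_Ioo (lt_add_of_pos_right p (sub_pos.2 hu.1))
  have hmd : md d (angle (q + (θ - p))) = md d (angle θ) := by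
    rw [md_angle, md_angle] at hpq ⊢
    obtain ⟨n, hn⟩ := angle_eq_angle_iff.1 hpq
    exact (angle_eq_angle_iff.2 ⟨n, by linear_combination hn⟩).symm
  have hdu : d * u < d * q + 1 := by
    have hmul := mul_lt_mul_of_pos_left hu.2 hd0
    rwa [mul_add, mul_one_div_cancel hd0.ne'] at hmul
  have hmem : angle (q + (θ - p)) ∈ w :=
    hL.angle_mem_of_md_angle_mem_image hd hw hq (by linarith [hθ.1]) (by linarith [hθ.2]) hdu huw
      ⟨_, hθw, hmd.symm⟩
  obtain ⟨n, hn⟩ := angle_eq_angle_iff.1 (hinj hθw hmem hmd.symm)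
  exact angle_eq_angle_iff.2 ⟨n, by linarith⟩

lemma rel_of_rel_md_of_injOn (hw : IsUnlClass L.rel w) (hinj : InjOn (md d) w) {x y : Circle1}
    (hx : x ∈ closure w) (hy : y ∈ closure w) (h : L.rel (md d x) (md d y)) : L.rel x y := by
  have hx_rat : x ∈ ratC := (md_mem_ratC_iff hd).1 (L.rel_rat _ _ h).1
  have hy_rat : y ∈ ratC := (md_mem_ratC_iff hd).1 (L.rel_rat _ _ h).2
  obtain ⟨p, hxp, hp⟩ := hw.exists_accumulatesRight hd hx_rat hx
  obtain ⟨q, hyq, hq⟩ := hw.exists_accumulatesRight hd hy_rat hy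
  obtain ⟨θ, hθ⟩ := hw.nonempty
  have hsub := hL.image_subset_connectedComponentIn hd hw hθ (md d x)
  have hmd : md d (angle p) = md d (angle q) := hp.md_angle_eq_of_image_subset hd hq
    (L.rel_md hxp) (L.trans _ _ _ h (L.rel_md hyq)) hsub hsub
  rw [hL.angle_eq_of_accumulatesRight_of_injOn hd hw hinj hp hq hmd] at hxp
  exact L.trans _ _ _ hxp (L.symm _ _ hyq)

lemma md_notMem_connectedComponentIn_of_ne (hw : IsUnlClass L.rel w) (hw' : IsUnlClass L.rel w')
    (hne : w ≠ w') {y y' : Circle1} (hy : y ∈ closure w) (hyy' : L.rel y y') (hy' : y' ∈ closure w')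
    {θ θ' : Circle1} (hθ : θ ∈ w) (hθ' : θ' ∈ w') :
    md d θ' ∉ connectedComponentIn (relClass L.rel (md d y))ᶜ (md d θ) := by
  intro hcomp
  obtain ⟨hy_rat, hy_rat'⟩ := L.rel_rat _ _ hyy'
  obtain ⟨p, hyp, hp⟩ := hw.exists_accumulatesRight hd hy_rat hy
  obtain ⟨q, hy'q, hq⟩ := hw'.exists_accumulatesRight hd hy_rat' hy'
  have hyq : L.rel y (angle q) := L.trans _ _ _ hyy' hy'q
  have hsub := hL.image_subset_connectedComponentIn hd hw hθ (md d y)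
  have hsub' := hL.image_subset_connectedComponentIn hd hw' hθ' (md d y)
  rw [← connectedComponentIn_eq hcomp] at hsub'
  have hmd : md d (angle p) = md d (angle q) :=
    hp.md_angle_eq_of_image_subset hd hq (L.rel_md hyp) (L.rel_md hyq) hsub hsub'
  have hpq : angle p = angle q :=
    hL.eq_of_md_eq (realExt_of_rel (L.trans _ _ _ (L.symm _ _ hyp) hyq)) hmd
  exact hne (hw.eq_of_accumulatesRight hw' (hp.of_angle_eq hpq) hq)

end HyperbolicLam

lemma RatLam.mem_connectedComponentIn_of_rel (L : RatLam) {x y z : Circle1} (hxy : ¬ L.rel x y)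
    (hyz : L.rel y z) : z ∈ connectedComponentIn (relClass L.rel x)ᶜ y := by
  obtain ⟨_, -, hsub⟩ := L.unlinkedClass x y hxy
  exact mem_connectedComponentIn_trans
    (mem_connectedComponentIn_symm (hsub (L.refl _ (L.rel_rat _ _ hyz).1))) (hsub hyz)

lemma HyperbolicLam.connectedComponentIn_subset_compl_relClass {d : ℕ} {L : InvRatLam d}
    (hL : HyperbolicLam d L.rel) (hd : 2 ≤ d) {w w' : Set Circle1} (hw : IsUnlClass L.rel w)
    (hw' : IsUnlClass L.rel w') (hne : w ≠ w') {x y y' θ' : Circle1} (hx : x ∈ closure w)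
    (hy : y ∈ closure w) (hyy' : L.rel y y') (hy' : y' ∈ closure w') (hθ' : θ' ∈ w')
    (hxy : ¬ L.rel (md d x) (md d y)) :
    connectedComponentIn (relClass L.rel (md d y))ᶜ (md d θ') ⊆ (relClass L.rel (md d x))ᶜ := by
  intro b hb hbx
  obtain ⟨θ, hθ⟩ := hw.nonempty
  have hyx : ¬ L.rel (md d y) (md d x) := fun h ↦ hxy (L.symm _ _ h)
  have hbθ := mem_connectedComponentIn_trans
    (hL.md_mem_connectedComponentIn_of_mem_closure hd hw hθ hx hyx)
    (L.mem_connectedComponentIn_of_rel hyx hbx)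
  exact hL.md_notMem_connectedComponentIn_of_ne hd hw hw' hne hy hyy' hy' hθ hθ'
    (mem_connectedComponentIn_trans hbθ (mem_connectedComponentIn_symm hb))

/-! ### Chains of links -/

namespace TuningData

variable {d : ℕ} {lam0 : InvRatLam d} {T : TuningData d lam0} {w : Set Circle1} {n m : ℕ}
  {x y x' y' : Circle1}

namespace Link

lemma symm (h : T.Link w n x y) : T.Link w n y x :=
  ⟨h.isUnlClass, h.infinite, h.image_mem_V, h.image_notMem_V, h.right_mem_closure,
    h.left_mem_closure, h.right_mem_ratC, h.left_mem_ratC, (T.lamv _).symm _ _ h.rel⟩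

lemma trans_rel_trans (h : T.Link w n x y) (hr : lam0.rel y x') (h' : T.Link w m x' y') :
    T.Link w n x y' := by
  obtain rfl : n = m := le_antisymm
    (not_lt.1 fun hlt ↦ h.image_notMem_V m hlt h'.image_mem_V)
    (not_lt.1 fun hlt ↦ h'.image_notMem_V n hlt h.image_mem_V)
  have hα : T.α ((md d)^[n] '' w) ((md d)^[n] y) = T.α ((md d)^[n] '' w) ((md d)^[n] x') :=
    (T.hα_fib _ h.image_mem_V _ (iterate_md_mem_closure_image d n h.right_mem_closure) _
      (iterate_md_mem_closure_image d n h'.left_mem_closure)).2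
      (realExt_of_rel (lam0.rel_iterate_md n hr))
  exact ⟨h.isUnlClass, h.infinite, h.image_mem_V, h.image_notMem_V, h.left_mem_closure,
    h'.right_mem_closure, h.left_mem_ratC, h'.right_mem_ratC,
    (T.lamv _).trans _ _ _ h.rel (hα ▸ h'.rel)⟩

variable (hd : 2 ≤ d)
include hd

lemma rel_of_rel_md_of_mem_V (h : T.Link w n x y) (hw : w ∈ T.V)
    (hlam : HyperbolicLam (T.δf w) (T.lamv w).rel) (hmd : lam0.rel (md d x) (md d y)) :
    lam0.rel x y := by
  have hδα : md (T.δf w) (T.α w x) = md (T.δf w) (T.α w y) :=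
    md_δf_α_eq_of_realExt_md hw h.left_mem_closure h.right_mem_closure (realExt_of_rel hmd)
  have hα : T.α w x = T.α w y := hlam.eq_of_md_eq (realExt_of_rel (h.rel_of_mem_V hw)) hδα
  exact lam0.rel_of_realExt hd
    ((T.hα_fib w hw _ h.left_mem_closure _ h.right_mem_closure).1 hα) (.inl h.left_mem_ratC)

variable (hlam0 : HyperbolicLam d lam0.rel)
  (hlamv : ∀ v ∈ T.V, HyperbolicLam (T.δf v) (T.lamv v).rel)
include hlam0 hlamv

lemma rel_of_rel_md (h : T.Link w n x y) (hmd : lam0.rel (md d x) (md d y)) : lam0.rel x y := by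
  by_cases hw : w ∈ T.V
  · exact h.rel_of_rel_md_of_mem_V hd hw (hlamv w hw) hmd
  · have hinj : InjOn (md d) w := by
      by_contra hinj
      exact hw ((T.hV w).2 ⟨h.isUnlClass, h.infinite, hinj⟩)
    exact hlam0.rel_of_rel_md_of_injOn hd h.isUnlClass hinj h.left_mem_closure
      h.right_mem_closure hmd

end Link

/-- `x` and `y` are joined by an alternating sequence of `λ₀`-relations and links between different
`λ₀`-classes, where consecutive links run through distinct unlinked classes and the first one runs
through `w`. -/
inductive ReducedChain (T : TuningData d lam0) : Set Circle1 → Circle1 → Circle1 → Prop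
  | single {w : Set Circle1} {n : ℕ} {x x' y' y : Circle1} :
      lam0.rel x x' → T.Link w n x' y' → ¬ lam0.rel x' y' → lam0.rel y' y → ReducedChain T w x y
  | cons {w w' : Set Circle1} {n : ℕ} {x x' y' y : Circle1} :
      lam0.rel x x' → T.Link w n x' y' → ¬ lam0.rel x' y' → ReducedChain T w' y' y → w ≠ w' →
      ReducedChain T w x y

namespace ReducedChain

lemma rel_trans (h : lam0.rel x' x) (hc : T.ReducedChain w x y) : T.ReducedChain w x' y := by
  cases hc with
  | single hx hlink hne hy => exact .single (lam0.trans _ _ _ h hx) hlink hne hy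
  | cons hx hlink hne hc hw => exact .cons (lam0.trans _ _ _ h hx) hlink hne hc hw

lemma isUnlClass (hc : T.ReducedChain w x y) : IsUnlClass lam0.rel w := by
  cases hc with
  | single _ hlink => exact hlink.isUnlClass
  | cons _ hlink => exact hlink.isUnlClass

lemma exists_rel_mem_closure (hc : T.ReducedChain w x y) :
    ∃ x', lam0.rel x x' ∧ x' ∈ closure w := by
  cases hc with
  | single hx hlink => exact ⟨_, hx, hlink.left_mem_closure⟩
  | cons hx hlink => exact ⟨_, hx, hlink.left_mem_closure⟩

end ReducedChain

lemma Link.rel_or_reducedChain {w' : Set Circle1} (h : T.Link w n x x')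
    (hc : T.ReducedChain w' x' y) : lam0.rel x y ∨ ∃ w, T.ReducedChain w x y := by
  have hx : lam0.rel x x := lam0.refl _ h.left_mem_ratC
  by_cases hxx' : lam0.rel x x'
  · exact .inr ⟨w', hc.rel_trans hxx'⟩
  by_cases hww' : w = w'
  · subst hww'
    cases hc with
    | @single _ _ _ _ y' _ hx' hlink _ hy =>
      by_cases hxy' : lam0.rel x y'
      · exact .inl (lam0.trans _ _ _ hxy' hy)
      · exact .inr ⟨w, .single hx (h.trans_rel_trans hx' hlink) hxy' hy⟩
    | @cons _ w'' _ _ _ y' _ hx' hlink _ hc hne =>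
      by_cases hxy' : lam0.rel x y'
      · exact .inr ⟨w'', hc.rel_trans hxy'⟩
      · exact .inr ⟨w, .cons hx (h.trans_rel_trans hx' hlink) hxy' hc hne⟩
  · exact .inr ⟨w, .cons hx h hxx' hc hww'⟩

lemma rel_or_reducedChain_of_tuningRel (h : tuningRel d lam0 T.V T.α T.lamv x y) :
    lam0.rel x y ∨ ∃ w, T.ReducedChain w x y := by
  obtain ⟨-, hy, h⟩ := h
  have hsymm : Std.Symm (tuningBase d lam0 T.V T.α T.lamv) := ⟨fun x y hxy ↦ by
    rw [tuningBase_iff] at hxy ⊢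
    exact hxy.imp (lam0.symm _ _) fun ⟨w, n, hlink⟩ ↦ ⟨w, n, hlink.symm⟩⟩
  rw [Relation.EqvGen.eqvGen_eq_reflTransGen] at h
  induction h using Relation.ReflTransGen.head_induction_on with
  | refl => exact .inl (lam0.refl _ hy)
  | @head x z hxz _ ih =>
    rcases T.tuningBase_iff.1 hxz with hrel | ⟨w, n, hlink⟩
    · exact ih.imp (lam0.trans _ _ _ hrel) fun ⟨w, hc⟩ ↦ ⟨w, hc.rel_trans hrel⟩
    · rcases ih with hzy | ⟨w', hc⟩
      · by_cases hxz : lam0.rel x z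
        · exact .inl (lam0.trans _ _ _ hxz hzy)
        · exact .inr ⟨w, .single (lam0.refl _ hlink.left_mem_ratC) hlink hxz hzy⟩
      · exact hlink.rel_or_reducedChain hc

section

variable (hd : 2 ≤ d) (hlam0 : HyperbolicLam d lam0.rel)
  (hlamv : ∀ v ∈ T.V, HyperbolicLam (T.δf v) (T.lamv v).rel)
include hd hlam0 hlamv

lemma ReducedChain.md_mem_connectedComponentIn (hc : T.ReducedChain w x y) {θ : Circle1}
    (hθ : θ ∈ w) : md d y ∈ connectedComponentIn (relClass lam0.rel (md d x))ᶜ (md d θ) := by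
  induction hc generalizing θ with
  | @single w n x x' y' y hx hlink hne hy =>
    have hmd := mt (hlink.rel_of_rel_md hd hlam0 hlamv) hne
    rw [lam0.relClass_eq (lam0.rel_md hx)]
    exact mem_connectedComponentIn_trans
      (hlam0.md_mem_connectedComponentIn_of_mem_closure hd hlink.isUnlClass hθ
        hlink.right_mem_closure hmd)
      (lam0.mem_connectedComponentIn_of_rel hmd (lam0.rel_md hy))
  | @cons w w' n x x' y' y hx hlink hne hc hww' ih =>
    have hmd := mt (hlink.rel_of_rel_md hd hlam0 hlamv) hne
    rw [lam0.relClass_eq (lam0.rel_md hx)]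
    obtain ⟨z, hy'z, hz⟩ := hc.exists_rel_mem_closure
    obtain ⟨θ', hθ'⟩ := hc.isUnlClass.nonempty
    have hy'θ := hlam0.md_mem_connectedComponentIn_of_mem_closure hd hlink.isUnlClass hθ
      hlink.right_mem_closure hmd
    have hzy' := lam0.mem_connectedComponentIn_of_rel hmd (lam0.rel_md hy'z)
    have hzθ' := hlam0.md_mem_connectedComponentIn_of_mem_closure hd hc.isUnlClass hθ' hz
      fun h ↦ hmd (lam0.trans _ _ _ h (lam0.symm _ _ (lam0.rel_md hy'z)))
    have hyθ' : md d y ∈ connectedComponentIn (relClass lam0.rel (md d x'))ᶜ (md d θ') :=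
      isPreconnected_connectedComponentIn.subset_connectedComponentIn
        (mem_connectedComponentIn (connectedComponentIn_nonempty_iff.1 ⟨_, ih hθ'⟩))
        (hlam0.connectedComponentIn_subset_compl_relClass hd hlink.isUnlClass hc.isUnlClass hww'
          hlink.left_mem_closure hlink.right_mem_closure hy'z hz hθ' hmd) (ih hθ')
    exact mem_connectedComponentIn_trans (mem_connectedComponentIn_trans
      (mem_connectedComponentIn_trans hy'θ hzy') (mem_connectedComponentIn_symm hzθ')) hyθ'

lemma ReducedChain.md_ne (hc : T.ReducedChain w x y) (hx : x ∈ ratC) : md d x ≠ md d y := by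
  intro hxy
  obtain ⟨θ, hθ⟩ := hc.isUnlClass.nonempty
  refine connectedComponentIn_subset _ _ (hc.md_mem_connectedComponentIn hd hlam0 hlamv hθ) ?_
  rw [← hxy]
  exact lam0.refl _ ((md_mem_ratC_iff hd).2 hx)

lemma IsTuning.hyperbolicLam {μ : InvRatLam d} (hμ : T.IsTuning μ) : HyperbolicLam d μ.rel := by
  intro A hA
  by_contra hinj
  have hA_rat : A ⊆ ratC :=
    hμ.pcfLam hd hlam0.pcfLam (fun v hv ↦ (hlamv v hv).pcfLam) A hA hinj
  obtain ⟨x₀, rfl⟩ := hA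
  refine hinj fun x hx y hy hxy ↦ ?_
  have hrel : μ.rel x y := μ.rel_of_realExt hd (hx.symm.trans _ _ _ hy) (.inl (hA_rat hx))
  rcases rel_or_reducedChain_of_tuningRel ((hμ x y).1 hrel) with h | ⟨w, hc⟩
  · exact hlam0.eq_of_md_eq (realExt_of_rel h) hxy
  · exact (hc.md_ne hd hlam0 hlamv (hA_rat hx) hxy).elim

end

end TuningData

/-- If `λ₀` and all the `λ_v` are post-critically finite, so is the
combinatorial tuning; if `λ₀` and all the `λ_v` are hyperbolic, so is the tuning. -/
theorem combinatorial_tuning_pcf_and_hyperbolic (d : ℕ) (hd : 2 ≤ d)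
    (lam0 : InvRatLam d) (T : TuningData d lam0) :
    ((PCFLam d lam0.rel ∧ ∀ v ∈ T.V, PCFLam (T.δf v) (T.lamv v).rel) →
      ∀ μ : InvRatLam d,
        (∀ x y : Circle1, μ.rel x y ↔ tuningRel d lam0 T.V T.α T.lamv x y) →
        PCFLam d μ.rel) ∧
    ((HyperbolicLam d lam0.rel ∧ ∀ v ∈ T.V, HyperbolicLam (T.δf v) (T.lamv v).rel) →
      ∀ μ : InvRatLam d,
        (∀ x y : Circle1, μ.rel x y ↔ tuningRel d lam0 T.V T.α T.lamv x y) →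
        HyperbolicLam d μ.rel) := by
  exact ⟨fun h _ hμ ↦ TuningData.IsTuning.pcfLam hμ hd h.1 h.2,
    fun h _ hμ ↦ TuningData.IsTuning.hyperbolicLam hd h.1 h.2 hμ⟩
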